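/- arXiv:1611.05488 — 2 statements merged into one kernel-verified Lean document; each statement's English description precedes it below -/
import Mathlib

section
/- Let N ≥ 1, let Ω ⊂ ℝ^N be an open set, let θ ≥ p > 1 and λ, γ > 0, and let s > (p+1)/2 satisfy L(s) < 0. Then there exists a finite constant C (depending only on N, p, θ, s, λ, γ) such that for every pair (u, v) of functions in C²(Ω), positive in Ω, satisfying −Δu = λ(v+1)^p and −Δv = γ(u+1)^θ in Ω and stable, and every y ∈ Ω and R > 0 with the closed ball B_R(y) contained in Ω, one has ∫_{B_{R/2}(y)} (u+1)^θ (v+1)^{s−1} dx ≤ (C/R²) ∫_{B_R(y)} (v+1)^s dx. -/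
open MeasureTheory Metric Real Set

noncomputable section

/-- The Euclidean Laplacian `Δw(x) = ∑ i, ∂²w/∂xᵢ²(x)` on `ℝ^N`. -/
def lap {N : ℕ} (w : EuclideanSpace ℝ (Fin N) → ℝ) (x : EuclideanSpace ℝ (Fin N)) : ℝ :=
  ∑ i : Fin N,
    fderiv ℝ (fun y => fderiv ℝ w y (EuclideanSpace.single i 1)) x (EuclideanSpace.single i 1)

/-- `φ` is a smooth compactly supported test function with support inside `Ω`. -/
def IsTestFun {N : ℕ} (Ω : Set (EuclideanSpace ℝ (Fin N)))
    (φ : EuclideanSpace ℝ (Fin N) → ℝ) : Prop :=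
  ContDiff ℝ (⊤ : ℕ∞) φ ∧ HasCompactSupport φ ∧ tsupport φ ⊆ Ω

/-- Stability of a classical solution of `-Δu = λ(v+1)^p, -Δv = γ(u+1)^θ` in `Ω`:
`√(λγpθ) ∫_Ω (v+1)^((p-1)/2) (u+1)^((θ-1)/2) φ² ≤ ∫_Ω |∇φ|²` for all test functions. -/
def IsStable {N : ℕ} (Ω : Set (EuclideanSpace ℝ (Fin N))) (lam gam p θ : ℝ)
    (u v : EuclideanSpace ℝ (Fin N) → ℝ) : Prop :=
  ∀ φ : EuclideanSpace ℝ (Fin N) → ℝ, IsTestFun Ω φ →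
    Real.sqrt (lam * gam * p * θ) *
        ∫ x in Ω, (v x + 1) ^ ((p - 1) / 2) * (u x + 1) ^ ((θ - 1) / 2) * φ x ^ 2
      ≤ ∫ x in Ω, ‖gradient φ x‖ ^ 2

/-- `(u,v)` is a positive classical solution of `-Δu = λ(v+1)^p, -Δv = γ(u+1)^θ` in `Ω`. -/
def IsSolution {N : ℕ} (Ω : Set (EuclideanSpace ℝ (Fin N))) (lam gam p θ : ℝ)
    (u v : EuclideanSpace ℝ (Fin N) → ℝ) : Prop :=
  ContDiffOn ℝ 2 u Ω ∧ ContDiffOn ℝ 2 v Ω ∧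
  (∀ x ∈ Ω, 0 < u x) ∧ (∀ x ∈ Ω, 0 < v x) ∧
  (∀ x ∈ Ω, -lap u x = lam * (v x + 1) ^ p) ∧
  (∀ x ∈ Ω, -lap v x = gam * (u x + 1) ^ θ)

/-- The quartic polynomial `L`. -/
def Lpoly (p θ s : ℝ) : ℝ :=
  s ^ 4 - (16 * p * θ * (p + 1) / (θ + 1)) * s ^ 2
    + (16 * p * θ * (p + 1) * (p + θ + 2) / (θ + 1) ^ 2) * s
    - 16 * p * θ * (p + 1) ^ 2 / (θ + 1) ^ 2



/-- Partial derivative in the `i`-th coordinate direction. -/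
def pd {N : ℕ} (i : Fin N) (f : EuclideanSpace ℝ (Fin N) → ℝ) (x : EuclideanSpace ℝ (Fin N)) : ℝ :=
  fderiv ℝ f x (EuclideanSpace.single i 1)

lemma lap_eq {N : ℕ} (w : EuclideanSpace ℝ (Fin N) → ℝ) (x : EuclideanSpace ℝ (Fin N)) :
    lap w x = ∑ i, pd i (pd i w) x := rfl

lemma pd_contDiff {N : ℕ} {f : EuclideanSpace ℝ (Fin N) → ℝ} (i : Fin N)
    (hf : ContDiff ℝ 2 f) : ContDiff ℝ 1 (pd i f) :=
  (hf.fderiv_right (m := 1) (by norm_num)).clm_apply contDiff_const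

lemma pd_continuous {N : ℕ} {f : EuclideanSpace ℝ (Fin N) → ℝ} (i : Fin N)
    (hf : ContDiff ℝ 1 f) : Continuous (pd i f) :=
  (hf.continuous_fderiv (by norm_num)).clm_apply continuous_const

lemma pd_mul {N : ℕ} {f g : EuclideanSpace ℝ (Fin N) → ℝ} (i : Fin N)
    (hf : ContDiff ℝ 1 f) (hg : ContDiff ℝ 1 g) :
    pd i (fun x => f x * g x) = fun x => f x * pd i g x + pd i f x * g x := by
  funext x
  have h1 := (hf.differentiable (by norm_num) x).hasFDerivAt
  have h2 := (hg.differentiable (by norm_num) x).hasFDerivAt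
  have := (h1.mul h2).fderiv
  simp only [pd]
  rw [show (fun x => f x * g x) = f * g from rfl, this]
  simp; ring

lemma pd_add {N : ℕ} {f g : EuclideanSpace ℝ (Fin N) → ℝ} (i : Fin N)
    (hf : ContDiff ℝ 1 f) (hg : ContDiff ℝ 1 g) :
    pd i (fun x => f x + g x) = fun x => pd i f x + pd i g x := by
  funext x
  have h1 := (hf.differentiable (by norm_num) x).hasFDerivAt
  have h2 := (hg.differentiable (by norm_num) x).hasFDerivAt
  have := (h1.add h2).fderiv
  simp only [pd]
  rw [show (fun x => f x + g x) = f + g from rfl, this]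
  simp

lemma pd_const_mul {N : ℕ} {f : EuclideanSpace ℝ (Fin N) → ℝ} (i : Fin N) (c : ℝ)
    (hf : ContDiff ℝ 1 f) :
    pd i (fun x => c * f x) = fun x => c * pd i f x := by
  funext x
  have h1 := (hf.differentiable (by norm_num) x).hasFDerivAt
  have := (h1.const_mul c).fderiv
  simp only [pd]
  rw [this]
  simp

lemma pd_comp {N : ℕ} {f : EuclideanSpace ℝ (Fin N) → ℝ} (i : Fin N)
    (hf : ContDiff ℝ 1 f) {F F' : ℝ → ℝ} (hF : ∀ x, HasDerivAt F (F' (f x)) (f x)) :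
    pd i (fun x => F (f x)) = fun x => F' (f x) * pd i f x := by
  funext x
  have h1 := (hf.differentiable (by norm_num) x).hasFDerivAt
  have := ((hF x).comp_hasFDerivAt x h1).fderiv
  simp only [pd]
  rw [show (fun x => F (f x)) = F ∘ f from rfl, this]
  simp

/-- composition with an affine dilation -/
lemma pd_comp_affine {N : ℕ} {f : EuclideanSpace ℝ (Fin N) → ℝ} (i : Fin N)
    (hf : ContDiff ℝ 1 f) (t : ℝ) (x : EuclideanSpace ℝ (Fin N)) :
    pd i (fun z => f (x + t • z)) = fun z => t * pd i f (x + t • z) := by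
  funext z
  have h1 := (hf.differentiable (by norm_num) (x + t • z)).hasFDerivAt
  have h2 : HasFDerivAt (fun z : EuclideanSpace ℝ (Fin N) => x + t • z)
      (t • ContinuousLinearMap.id ℝ (EuclideanSpace ℝ (Fin N))) z :=
    ((hasFDerivAt_id z).const_smul t).const_add x
  have := (h1.comp z h2).fderiv
  simp only [pd]
  rw [show (fun z => f (x + t • z)) = f ∘ (fun z => x + t • z) from rfl, this]
  simp

lemma lap_continuous {N : ℕ} {f : EuclideanSpace ℝ (Fin N) → ℝ}
    (hf : ContDiff ℝ 2 f) : Continuous (lap f) := by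
  have : lap f = fun x => ∑ i, pd i (pd i f) x := funext fun x => lap_eq f x
  rw [this]
  exact continuous_finsetSum _ fun i _ => pd_continuous i (pd_contDiff i hf)

lemma lap_mul {N : ℕ} {f g : EuclideanSpace ℝ (Fin N) → ℝ}
    (hf : ContDiff ℝ 2 f) (hg : ContDiff ℝ 2 g) (x : EuclideanSpace ℝ (Fin N)) :
    lap (fun x => f x * g x) x
      = f x * lap g x + 2 * ∑ i, pd i f x * pd i g x + lap f x * g x := by
  have hf1 : ContDiff ℝ 1 f := hf.of_le (by norm_num)
  have hg1 : ContDiff ℝ 1 g := hg.of_le (by norm_num)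
  simp only [lap_eq, Finset.mul_sum, Finset.sum_mul]
  rw [← Finset.sum_add_distrib, ← Finset.sum_add_distrib]
  refine Finset.sum_congr rfl fun i _ => ?_
  rw [pd_mul i hf1 hg1, pd_add i (hf1.mul (pd_contDiff i hg)) ((pd_contDiff i hf).mul hg1),
    pd_mul i hf1 (pd_contDiff i hg), pd_mul i (pd_contDiff i hf) hg1]
  ring

lemma lap_add {N : ℕ} {f g : EuclideanSpace ℝ (Fin N) → ℝ}
    (hf : ContDiff ℝ 2 f) (hg : ContDiff ℝ 2 g) (x : EuclideanSpace ℝ (Fin N)) :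
    lap (fun x => f x + g x) x = lap f x + lap g x := by
  have hf1 : ContDiff ℝ 1 f := hf.of_le (by norm_num)
  have hg1 : ContDiff ℝ 1 g := hg.of_le (by norm_num)
  simp only [lap_eq]
  rw [← Finset.sum_add_distrib]
  refine Finset.sum_congr rfl fun i _ => ?_
  rw [pd_add i hf1 hg1, pd_add i (pd_contDiff i hf) (pd_contDiff i hg)]

lemma lap_const_mul {N : ℕ} {f : EuclideanSpace ℝ (Fin N) → ℝ} (c : ℝ)
    (hf : ContDiff ℝ 2 f) (x : EuclideanSpace ℝ (Fin N)) :
    lap (fun x => c * f x) x = c * lap f x := by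
  have hf1 : ContDiff ℝ 1 f := hf.of_le (by norm_num)
  simp only [lap_eq, Finset.mul_sum]
  refine Finset.sum_congr rfl fun i _ => ?_
  rw [pd_const_mul i c hf1, pd_const_mul i c (pd_contDiff i hf)]

lemma lap_comp {N : ℕ} {f : EuclideanSpace ℝ (Fin N) → ℝ}
    (hf : ContDiff ℝ 2 f) {F F' F'' : ℝ → ℝ} (hF : ∀ x, HasDerivAt F (F' (f x)) (f x))
    (hF' : ∀ x, HasDerivAt F' (F'' (f x)) (f x)) (hC : ContDiff ℝ 1 (fun x => F' (f x)))
    (x : EuclideanSpace ℝ (Fin N)) :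
    lap (fun x => F (f x)) x = F'' (f x) * ∑ i, pd i f x ^ 2 + F' (f x) * lap f x := by
  have hf1 : ContDiff ℝ 1 f := hf.of_le (by norm_num)
  simp only [lap_eq, Finset.mul_sum]
  rw [← Finset.sum_add_distrib]
  refine Finset.sum_congr rfl fun i _ => ?_
  rw [pd_comp i hf1 hF, pd_mul i hC (pd_contDiff i hf), pd_comp i hf1 hF']
  ring

lemma lap_comp_affine {N : ℕ} {f : EuclideanSpace ℝ (Fin N) → ℝ}
    (hf : ContDiff ℝ 2 f) (t : ℝ) (x z : EuclideanSpace ℝ (Fin N)) :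
    lap (fun z => f (x + t • z)) z = t ^ 2 * lap f (x + t • z) := by
  have hf1 : ContDiff ℝ 1 f := hf.of_le (by norm_num)
  simp only [lap_eq, Finset.mul_sum]
  refine Finset.sum_congr rfl fun i _ => ?_
  have h2 : ContDiff ℝ 1 (fun z => pd i f (x + t • z)) :=
    (pd_contDiff i hf).comp (by fun_prop)
  rw [pd_comp_affine i hf1, pd_const_mul i t h2, pd_comp_affine i (pd_contDiff i hf)]
  ring

lemma pd_hasCompactSupport {N : ℕ} {f : EuclideanSpace ℝ (Fin N) → ℝ} (i : Fin N)
    (hf : HasCompactSupport f) : HasCompactSupport (pd i f) :=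
  hf.fderiv_apply ℝ (EuclideanSpace.single i 1)

lemma pd_zero_of_notMem {N : ℕ} {f : EuclideanSpace ℝ (Fin N) → ℝ} (i : Fin N)
    {x : EuclideanSpace ℝ (Fin N)} (hx : x ∉ tsupport f) : pd i f x = 0 := by
  have := (notMem_tsupport_iff_eventuallyEq.1 hx).fderiv_eq (𝕜 := ℝ)
  simp [pd, this]

lemma tsupport_pd_subset {N : ℕ} {f : EuclideanSpace ℝ (Fin N) → ℝ} (i : Fin N) :
    tsupport (pd i f) ⊆ tsupport f :=
  closure_minimal (fun x hx => by
    by_contra h; exact hx (pd_zero_of_notMem i h)) (isClosed_tsupport f)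

lemma lap_zero_of_notMem {N : ℕ} {f : EuclideanSpace ℝ (Fin N) → ℝ}
    {x : EuclideanSpace ℝ (Fin N)} (hx : x ∉ tsupport f) : lap f x = 0 := by
  rw [lap_eq]
  exact Finset.sum_eq_zero fun i _ => pd_zero_of_notMem i fun h => hx (tsupport_pd_subset i h)

lemma hcs_of_zero {N : ℕ} {f g : EuclideanSpace ℝ (Fin N) → ℝ} (hf : HasCompactSupport f)
    (h : ∀ x, x ∉ tsupport f → g x = 0) : HasCompactSupport g :=
  HasCompactSupport.intro hf h

lemma integral_mul_pd {N : ℕ} {f g : EuclideanSpace ℝ (Fin N) → ℝ} (i : Fin N)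
    (hf : ContDiff ℝ 1 f) (hg : ContDiff ℝ 1 g) (hc : HasCompactSupport g) :
    ∫ x, f x * pd i g x = - ∫ x, pd i f x * g x := by
  refine integral_mul_fderiv_eq_neg_fderiv_mul_of_integrable
    (((pd_continuous i hf).mul hg.continuous).integrable_of_hasCompactSupport ?_)
    ((hf.continuous.mul (pd_continuous i hg)).integrable_of_hasCompactSupport ?_)
    ((hf.continuous.mul hg.continuous).integrable_of_hasCompactSupport ?_)
    (fun x _ => hf.differentiable (by norm_num) x) (fun x _ => hg.differentiable (by norm_num) x)
  · exact hc.mul_left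
  · exact (pd_hasCompactSupport i hc).mul_left
  · exact hc.mul_left

lemma integral_grad_mul_grad {N : ℕ} {f g : EuclideanSpace ℝ (Fin N) → ℝ}
    (hf : ContDiff ℝ 1 f) (hg : ContDiff ℝ 2 g) (hc : HasCompactSupport g) :
    ∫ x, ∑ i, pd i f x * pd i g x = - ∫ x, f x * lap g x := by
  have hg1 : ContDiff ℝ 1 g := hg.of_le (by norm_num)
  simp only [lap_eq, Finset.mul_sum]
  rw [integral_finsetSum, integral_finsetSum, ← Finset.sum_neg_distrib]
  · refine Finset.sum_congr rfl fun i _ => ?_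
    rw [integral_mul_pd i hf (pd_contDiff i hg) (pd_hasCompactSupport i hc), neg_neg]
  · intro i _
    exact (hf.continuous.mul (pd_continuous i (pd_contDiff i hg))).integrable_of_hasCompactSupport
      (pd_hasCompactSupport i (pd_hasCompactSupport i hc)).mul_left
  · intro i _
    exact ((pd_continuous i hf).mul (pd_continuous i hg1)).integrable_of_hasCompactSupport
      (pd_hasCompactSupport i hc).mul_left

lemma integral_lap_mul {N : ℕ} {f g : EuclideanSpace ℝ (Fin N) → ℝ}
    (hf : ContDiff ℝ 2 f) (hg : ContDiff ℝ 2 g) (hc : HasCompactSupport g) :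
    ∫ x, lap f x * g x = ∫ x, f x * lap g x := by
  have hf1 : ContDiff ℝ 1 f := hf.of_le (by norm_num)
  have hg1 : ContDiff ℝ 1 g := hg.of_le (by norm_num)
  have h1 := integral_grad_mul_grad hf1 hg hc
  rw [← neg_inj, ← h1]
  simp only [lap_eq, Finset.sum_mul]
  rw [integral_finsetSum, integral_finsetSum, ← Finset.sum_neg_distrib]
  · refine Finset.sum_congr rfl fun i _ => ?_
    rw [integral_mul_pd i (pd_contDiff i hf) hg1 hc]
  · intro i _
    exact ((pd_continuous i hf1).mul (pd_continuous i hg1)).integrable_of_hasCompactSupport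
      (pd_hasCompactSupport i hc).mul_left
  · intro i _
    exact ((pd_continuous i (pd_contDiff i hf)).mul hg.continuous).integrable_of_hasCompactSupport
      hc.mul_left

lemma norm_gradient_sq {N : ℕ} (f : EuclideanSpace ℝ (Fin N) → ℝ) (x : EuclideanSpace ℝ (Fin N)) :
    ‖gradient f x‖ ^ 2 = ∑ i, pd i f x ^ 2 := by
  rw [EuclideanSpace.norm_sq_eq]
  refine Finset.sum_congr rfl fun i _ => ?_
  have : pd i f x = gradient f x i := by
    have h := InnerProductSpace.toDual_symm_apply (𝕜 := ℝ) (x := EuclideanSpace.single i (1:ℝ))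
      (y := fderiv ℝ f x)
    rw [EuclideanSpace.inner_single_right] at h
    rw [pd, ← h]
    simp [gradient]
  rw [this, Real.norm_eq_abs, sq_abs]


lemma integral_lin4 {N : ℕ} {f1 f2 f3 f4 : EuclideanSpace ℝ (Fin N) → ℝ} {c1 c2 c3 : ℝ}
    (i1 : Integrable f1) (i2 : Integrable f2) (i3 : Integrable f3) (i4 : Integrable f4) :
    ∫ x, (c1 * f1 x + c2 * f2 x + c3 * f3 x + f4 x)
      = c1 * (∫ x, f1 x) + c2 * (∫ x, f2 x) + c3 * (∫ x, f3 x) + ∫ x, f4 x := by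
  have j1 := i1.const_mul c1
  have j2 := i2.const_mul c2
  have j3 := i3.const_mul c3
  have j12 : Integrable (fun x => c1 * f1 x + c2 * f2 x) := j1.add j2
  have j123 : Integrable (fun x => c1 * f1 x + c2 * f2 x + c3 * f3 x) := j12.add j3
  rw [integral_add j123 i4, integral_add j12 j3, integral_add j1 j2, integral_const_mul,
    integral_const_mul, integral_const_mul]

lemma rpow_comp_contDiff {N : ℕ} {W : EuclideanSpace ℝ (Fin N) → ℝ} (hW : ContDiff ℝ 2 W)
    (hpos : ∀ x, 0 < W x) (a : ℝ) : ContDiff ℝ 2 (fun x => W x ^ a) :=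
  hW.rpow_const_of_ne fun x => (hpos x).ne'

lemma pd_rpow {N : ℕ} {W : EuclideanSpace ℝ (Fin N) → ℝ} (hW : ContDiff ℝ 2 W)
    (hpos : ∀ x, 0 < W x) (a : ℝ) (i : Fin N) :
    pd i (fun x => W x ^ a) = fun x => a * W x ^ (a - 1) * pd i W x :=
  pd_comp (F := fun t => t ^ a) (F' := fun t => a * t ^ (a - 1)) i (hW.of_le (by norm_num))
    fun x => Real.hasDerivAt_rpow_const (Or.inl (hpos x).ne')

lemma lap_rpow {N : ℕ} {W : EuclideanSpace ℝ (Fin N) → ℝ} (hW : ContDiff ℝ 2 W)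
    (hpos : ∀ x, 0 < W x) (a : ℝ) (x : EuclideanSpace ℝ (Fin N)) :
    lap (fun x => W x ^ a) x
      = a * (a - 1) * W x ^ (a - 2) * ∑ i, pd i W x ^ 2 + a * W x ^ (a - 1) * lap W x := by
  refine lap_comp (F := fun t => t ^ a) (F' := fun t => a * t ^ (a - 1))
    (F'' := fun t => a * (a - 1) * t ^ (a - 2)) hW
    (fun x => Real.hasDerivAt_rpow_const (Or.inl (hpos x).ne')) (fun x => ?_) ?_ x
  · have := (Real.hasDerivAt_rpow_const (p := a - 1) (Or.inl (hpos x).ne')).const_mul a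
    have e : a * ((a - 1) * W x ^ (a - 1 - 1)) = a * (a - 1) * W x ^ (a - 2) := by
      rw [show a - 1 - 1 = a - 2 by ring]; ring
    rw [e] at this
    exact this
  · exact contDiff_const.mul ((rpow_comp_contDiff hW hpos (a - 1)).of_le (by norm_num))

lemma energy {N : ℕ} {W g η : EuclideanSpace ℝ (Fin N) → ℝ} (hW : ContDiff ℝ 2 W)
    (hpos : ∀ x, 0 < W x) (hη : ContDiff ℝ 2 η) (hc : HasCompactSupport η) (hg : Continuous g)
    {m : ℝ} (hm : 1 / 2 < m) (hgW : ∀ x ∈ tsupport η, -lap W x ≤ g x) :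
    ∫ x, ∑ i, pd i (fun x => W x ^ m * η x) x ^ 2
      ≤ m ^ 2 / (2 * m - 1) * (∫ x, W x ^ (2 * m - 1) * g x * η x ^ 2)
        + ∫ x, W x ^ (2 * m) *
          (m / (2 * (2 * m - 1)) * lap (fun x => η x ^ 2) x - η x * lap η x) := by
  have hW1 : ContDiff ℝ 1 W := hW.of_le (by norm_num)
  have hη1 : ContDiff ℝ 1 η := hη.of_le (by norm_num)
  have h2m : 0 < 2 * m - 1 := by linarith
  have hΨ : ContDiff ℝ 2 (fun x => W x ^ m) := rpow_comp_contDiff hW hpos m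
  have hW2 : ContDiff ℝ 2 (fun x => W x ^ (2 * m)) := rpow_comp_contDiff hW hpos _
  have hη2 : ContDiff ℝ 2 (fun x => η x ^ 2) := hη.pow 2
  have hc2 : HasCompactSupport (fun x => η x ^ 2) := hcs_of_zero hc fun x hx => by
    simp [image_eq_zero_of_notMem_tsupport hx]
  have hWc : Continuous (fun x => W x ^ (2 * m - 1)) := (rpow_comp_contDiff hW hpos _).continuous
  have key : ∀ x, ∑ i, pd i (fun x => W x ^ m * η x) x ^ 2
      = m / (2 * (2 * m - 1)) * (lap (fun x => W x ^ (2 * m)) x * η x ^ 2)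
        + m ^ 2 / (2 * m - 1) * (W x ^ (2 * m - 1) * (-lap W x) * η x ^ 2)
        + 1 / 2 * (∑ i, pd i (fun x => W x ^ (2 * m)) x * pd i (fun x => η x ^ 2) x)
        + W x ^ (2 * m) * ∑ i, pd i η x ^ 2 := by
    intro x
    have e2 : ∀ i, pd i (fun x => η x ^ 2) x = 2 * η x * pd i η x := by
      intro i
      simp only [sq]
      rw [pd_mul i hη1 hη1]; ring
    rw [lap_rpow hW hpos]
    have eW : W x ^ (2 * m) = W x ^ (2 * m - 2) * W x ^ 2 := by
      rw [← Real.rpow_natCast, ← Real.rpow_add (hpos x)]; congr 1; push_cast; ring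
    have eW1 : W x ^ (2 * m - 1) = W x ^ (2 * m - 2) * W x := by
      nth_rewrite 3 [← Real.rpow_one (W x)]
      rw [← Real.rpow_add (hpos x)]; congr 1; ring
    have eW3 : (W x ^ (m - 1)) ^ 2 = W x ^ (2 * m - 2) := by
      rw [← Real.rpow_natCast, ← Real.rpow_mul (hpos x).le]; congr 1; push_cast; ring
    have eW4 : W x ^ m = W x ^ (m - 1) * W x := by
      nth_rewrite 3 [← Real.rpow_one (W x)]
      rw [← Real.rpow_add (hpos x)]; congr 1; ring
    have e3 : ∀ i, pd i (fun x => W x ^ m * η x) x ^ 2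
        = W x ^ (2 * m - 2) * (m ^ 2 * η x ^ 2 * pd i W x ^ 2
          + 2 * m * W x * η x * (pd i W x * pd i η x) + W x ^ 2 * pd i η x ^ 2) := by
      intro i
      rw [pd_mul i (hΨ.of_le (by norm_num)) hη1, pd_rpow hW hpos, ← eW3]
      simp only []
      rw [eW4]; ring
    simp only [e2, e3, pd_rpow hW hpos]
    rw [← Finset.mul_sum, Finset.sum_add_distrib, Finset.sum_add_distrib, ← Finset.mul_sum,
      ← Finset.mul_sum, ← Finset.mul_sum]
    have e4 : ∑ i, 2 * m * W x ^ (2 * m - 1) * pd i W x * (2 * η x * pd i η x)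
        = 4 * m * W x ^ (2 * m - 1) * η x * ∑ i, pd i W x * pd i η x := by
      rw [Finset.mul_sum]; exact Finset.sum_congr rfl fun i _ => by ring
    rw [e4, eW, eW1]
    field_simp
    ring
  have i1 : Integrable (fun x => lap (fun x => W x ^ (2 * m)) x * η x ^ 2) :=
    ((lap_continuous hW2).mul hη2.continuous).integrable_of_hasCompactSupport hc2.mul_left
  have i2 : Integrable (fun x => W x ^ (2 * m - 1) * (-lap W x) * η x ^ 2) :=
    ((hWc.mul (lap_continuous hW).neg).mul hη2.continuous).integrable_of_hasCompactSupport
      hc2.mul_left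
  have i2' : Integrable (fun x => W x ^ (2 * m - 1) * g x * η x ^ 2) :=
    ((hWc.mul hg).mul hη2.continuous).integrable_of_hasCompactSupport hc2.mul_left
  have i3 : Integrable (fun x => ∑ i, pd i (fun x => W x ^ (2 * m)) x * pd i (fun x => η x ^ 2) x) := by
    refine integrable_finsetSum _ fun i _ => ?_
    exact ((pd_continuous i (hW2.of_le (by norm_num))).mul
      (pd_continuous i (hη2.of_le (by norm_num)))).integrable_of_hasCompactSupport
      (pd_hasCompactSupport i hc2).mul_left
  have i4 : Integrable (fun x => W x ^ (2 * m) * ∑ i, pd i η x ^ 2) := by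
    refine (hW2.continuous.mul (continuous_finsetSum _ fun i _ =>
      (pd_continuous i hη1).pow 2)).integrable_of_hasCompactSupport (hcs_of_zero hc fun x hx => ?_)
    simp [pd_zero_of_notMem _ hx]
  have i5 : Integrable (fun x => W x ^ (2 * m) * lap (fun x => η x ^ 2) x) :=
    (hW2.continuous.mul (lap_continuous hη2)).integrable_of_hasCompactSupport
      (hcs_of_zero hc2 fun x hx => by simp [lap_zero_of_notMem hx])
  have i6 : Integrable (fun x => W x ^ (2 * m) * (η x * lap η x)) :=
    (hW2.continuous.mul (hη.continuous.mul (lap_continuous hη))).integrable_of_hasCompactSupport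
      (hcs_of_zero hc fun x hx => by simp [lap_zero_of_notMem hx])
  simp_rw [key]
  rw [integral_lin4 i1 i2 i3 i4, integral_lap_mul hW2 hη2 hc2,
    integral_grad_mul_grad (hW2.of_le (by norm_num)) hη2 hc2]
  have f1 : ∫ x, W x ^ (2 * m - 1) * (-lap W x) * η x ^ 2
      ≤ ∫ x, W x ^ (2 * m - 1) * g x * η x ^ 2 := by
    refine integral_mono i2 i2' fun x => ?_
    by_cases hx : x ∈ tsupport η
    · have := hgW x hx
      have := Real.rpow_nonneg (hpos x).le (2 * m - 1)
      simp only []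
      gcongr
    · simp [image_eq_zero_of_notMem_tsupport hx]
  have f2 : ∫ x, W x ^ (2 * m) * ∑ i, pd i η x ^ 2
      = 1 / 2 * (∫ x, W x ^ (2 * m) * lap (fun x => η x ^ 2) x)
        - ∫ x, W x ^ (2 * m) * (η x * lap η x) := by
    rw [← integral_const_mul, ← integral_sub (i5.const_mul _) i6]
    congr 1; funext x
    have : lap (fun x => η x ^ 2) x = 2 * (η x * lap η x) + 2 * ∑ i, pd i η x ^ 2 := by
      simp only [sq]
      rw [lap_mul hη hη]; ring
    rw [this]; ring
  have f3 : ∫ x, W x ^ (2 * m) *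
          (m / (2 * (2 * m - 1)) * lap (fun x => η x ^ 2) x - η x * lap η x)
      = m / (2 * (2 * m - 1)) * (∫ x, W x ^ (2 * m) * lap (fun x => η x ^ 2) x)
        - ∫ x, W x ^ (2 * m) * (η x * lap η x) := by
    rw [← integral_const_mul, ← integral_sub (i5.const_mul _) i6]
    congr 1; funext x; ring
  rw [f2, f3]
  have : m ^ 2 / (2 * m - 1) * (∫ x, W x ^ (2 * m - 1) * (-lap W x) * η x ^ 2)
      ≤ m ^ 2 / (2 * m - 1) * ∫ x, W x ^ (2 * m - 1) * g x * η x ^ 2 := by gcongr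
  linarith

open scoped Convolution in
lemma stab_ext {N : ℕ} {a ψ : EuclideanSpace ℝ (Fin N) → ℝ} (ha : Continuous a)
    {y : EuclideanSpace ℝ (Fin N)} {ρ ρ' : ℝ} (hρ : ρ' < ρ)
    (h : ∀ φ : EuclideanSpace ℝ (Fin N) → ℝ, ContDiff ℝ (⊤ : ℕ∞) φ → HasCompactSupport φ →
      tsupport φ ⊆ ball y ρ → ∫ x, a x * φ x ^ 2 ≤ ∫ x, ∑ i, pd i φ x ^ 2)
    (hψ : ContDiff ℝ 1 ψ) (hs : tsupport ψ ⊆ closedBall y ρ') :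
    ∫ x, a x * ψ x ^ 2 ≤ ∫ x, ∑ i, pd i ψ x ^ 2 := by
  have hcψ : HasCompactSupport ψ :=
    (isCompact_closedBall y ρ').of_isClosed_subset (isClosed_tsupport _) hs
  set δ : ℕ → ℝ := fun n => (ρ - ρ') / (n + 2) with hδ
  have hδpos : ∀ n, 0 < δ n := fun n => div_pos (by linarith) (by positivity)
  have hδlt : ∀ n, ρ' + δ n < ρ := fun n => by
    have : δ n < ρ - ρ' := by
      rw [hδ]; simp only []
      rw [div_lt_iff₀ (by positivity)]
      have : (0:ℝ) ≤ n := n.cast_nonneg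
      nlinarith
    linarith
  let b : ℕ → ContDiffBump (0 : EuclideanSpace ℝ (Fin N)) := fun n =>
    ⟨δ n / 2, δ n, by have := hδpos n; linarith, by have := hδpos n; linarith⟩
  have hbr : Filter.Tendsto (fun n => (b n).rOut) Filter.atTop (nhds 0) := by
    have : Filter.Tendsto (fun n : ℕ => (ρ - ρ') / ((n : ℝ) + 2)) Filter.atTop (nhds 0) :=
      Filter.Tendsto.div_atTop tendsto_const_nhds
        (Filter.tendsto_atTop_add_const_right _ _ tendsto_natCast_atTop_atTop)
    exact this
  let φ : ℕ → EuclideanSpace ℝ (Fin N) → ℝ := fun n =>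
    ((b n).normed volume ⋆[ContinuousLinearMap.lsmul ℝ ℝ, volume] ψ)
  have hφsmooth : ∀ n, ContDiff ℝ (⊤ : ℕ∞) (φ n) := fun n =>
    (b n).hasCompactSupport_normed.contDiff_convolution_left _ (b n).contDiff_normed
      hψ.continuous.locallyIntegrable
  have hsupp : ∀ n, tsupport (φ n) ⊆ closedBall y (ρ' + δ n) := by
    intro n
    refine closure_minimal ?_ isClosed_closedBall
    refine (support_convolution_subset _).trans ?_
    rintro _ ⟨u, hu, v, hv, rfl⟩
    rw [(b n).support_normed_eq] at hu
    have hv' := hs (subset_tsupport _ hv)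
    rw [mem_ball_zero_iff] at hu
    rw [mem_closedBall, dist_eq_norm] at hv' ⊢
    have : ‖u + v - y‖ ≤ ‖u‖ + ‖v - y‖ := by rw [add_sub_assoc]; exact norm_add_le _ _
    have h3 : ‖u‖ < δ n := hu
    show ‖u + v - y‖ ≤ _
    linarith
  have hsupp' : ∀ n, tsupport (φ n) ⊆ ball y ρ := fun n =>
    (hsupp n).trans (closedBall_subset_ball (hδlt n))
  have hcφ : ∀ n, HasCompactSupport (φ n) := fun n =>
    (isCompact_closedBall y _).of_isClosed_subset (isClosed_tsupport _) (hsupp n)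
  have hpd : ∀ n i x, pd i (φ n) x
      = ((b n).normed volume ⋆[ContinuousLinearMap.lsmul ℝ ℝ, volume] (pd i ψ)) x := by
    intro n i x
    have := (hcψ.hasFDerivAt_convolution_right (μ := volume) (ContinuousLinearMap.lsmul ℝ ℝ)
      ((b n).continuous_normed (μ := volume)).locallyIntegrable hψ x).fderiv
    simp only [pd, φ]
    rw [this]
    exact convolution_precompR_apply _
      ((b n).continuous_normed (μ := volume)).locallyIntegrable (hcψ.fderiv ℝ)
      (hψ.continuous_fderiv (by norm_num)) x _
  -- uniform bound
  have hbd : ∀ f : EuclideanSpace ℝ (Fin N) → ℝ, Continuous f → HasCompactSupport f →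
      ∃ M, 0 ≤ M ∧ ∀ n x, |((b n).normed volume ⋆[ContinuousLinearMap.lsmul ℝ ℝ, volume] f) x| ≤ M := by
    intro f hf hcf
    obtain ⟨C, hC⟩ := hf.bounded_above_of_compact_support hcf
    have hC0 : 0 ≤ C := (norm_nonneg _).trans (hC 0)
    refine ⟨3 * C, by linarith, fun n x => ?_⟩
    have := (b n).dist_normed_convolution_le (μ := volume) (g := f) (x₀ := x) (ε := 2 * C)
      hf.aestronglyMeasurable fun z _ => by
        rw [dist_eq_norm]
        refine (norm_sub_le _ _).trans ?_
        have := hC z; have := hC x; linarith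
    rw [Real.dist_eq] at this
    have h2 := hC x
    rw [Real.norm_eq_abs] at h2
    have h3 := abs_sub_abs_le_abs_sub
      (((b n).normed volume ⋆[ContinuousLinearMap.lsmul ℝ ℝ, volume] f) x) (f x)
    linarith
  obtain ⟨A, hA⟩ := (isCompact_closedBall y ρ).exists_bound_of_continuousOn ha.continuousOn
  have hfin : volume (closedBall y ρ) ≠ ⊤ := (isCompact_closedBall y ρ).measure_lt_top.ne
  have hindi : ∀ c : ℝ, Integrable ((closedBall y ρ).indicator fun _ => c) := fun c =>
    (integrable_indicator_iff measurableSet_closedBall).2 (integrableOn_const hfin)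
  have hout : ∀ n x, x ∉ closedBall y ρ → x ∉ tsupport (φ n) := fun n x hx hx' =>
    hx (ball_subset_closedBall (hsupp' n hx'))
  have lim1 : Filter.Tendsto (fun n => ∫ x, a x * φ n x ^ 2) Filter.atTop
      (nhds (∫ x, a x * ψ x ^ 2)) := by
    obtain ⟨M, hM0, hM⟩ := hbd ψ hψ.continuous hcψ
    refine tendsto_integral_of_dominated_convergence
      ((closedBall y ρ).indicator fun _ => A * M ^ 2) (fun n => ?_) (hindi _) (fun n => ?_) ?_
    · exact (ha.mul ((hφsmooth n).continuous.pow 2)).aestronglyMeasurable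
    · refine Filter.Eventually.of_forall fun x => ?_
      by_cases hx : x ∈ closedBall y ρ
      · rw [indicator_of_mem hx, norm_mul, norm_pow]
        have h1 := hA x hx
        have h2 : ‖φ n x‖ ≤ M := hM n x
        gcongr
        exact (norm_nonneg _).trans h1
      · rw [indicator_of_notMem hx, image_eq_zero_of_notMem_tsupport (hout n x hx)]; simp
    · refine Filter.Eventually.of_forall fun x => ?_
      exact ((ContDiffBump.convolution_tendsto_right_of_continuous hbr hψ.continuous x).pow 2).const_mul _
  have lim2 : Filter.Tendsto (fun n => ∫ x, ∑ i, pd i (φ n) x ^ 2) Filter.atTop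
      (nhds (∫ x, ∑ i, pd i ψ x ^ 2)) := by
    choose M hM0 hM using fun i => hbd (pd i ψ) (pd_continuous i hψ) (pd_hasCompactSupport i hcψ)
    refine tendsto_integral_of_dominated_convergence
      ((closedBall y ρ).indicator fun _ => ∑ i, M i ^ 2) (fun n => ?_) (hindi _) (fun n => ?_) ?_
    · exact (continuous_finsetSum _ fun i _ => (pd_continuous i ((hφsmooth n).of_le
        (by exact_mod_cast le_top))).pow 2).aestronglyMeasurable
    · refine Filter.Eventually.of_forall fun x => ?_
      by_cases hx : x ∈ closedBall y ρ
      · rw [indicator_of_mem hx, Real.norm_eq_abs,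
          abs_of_nonneg (Finset.sum_nonneg fun i _ => sq_nonneg _)]
        refine Finset.sum_le_sum fun i _ => ?_
        rw [← sq_abs, hpd]
        have := hM i n x
        gcongr
      · rw [indicator_of_notMem hx]
        simp [pd_zero_of_notMem _ (hout n x hx)]
    · refine Filter.Eventually.of_forall fun x => ?_
      refine tendsto_finsetSum _ fun i _ => ?_
      simp_rw [hpd]
      exact (ContDiffBump.convolution_tendsto_right_of_continuous hbr (pd_continuous i hψ) x).pow 2
  exact le_of_tendsto_of_tendsto' lim1 lim2 fun n => h (φ n) (hφsmooth n) (hcφ n) (hsupp' n)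


lemma hasDerivAt_max_sq (t : ℝ) : HasDerivAt (fun t : ℝ => max t 0 ^ 2) (2 * max t 0) t := by
  rcases lt_trichotomy t 0 with h | h | h
  · have : (fun t : ℝ => max t 0 ^ 2) =ᶠ[nhds t] fun _ => 0 := by
      filter_upwards [Iio_mem_nhds h] with u hu
      rw [max_eq_right (le_of_lt hu)]; simp
    rw [max_eq_right h.le]
    simpa using (hasDerivAt_const t (0:ℝ)).congr_of_eventuallyEq this
  · subst h
    rw [hasDerivAt_iff_isLittleO]
    simp only [max_self, mul_zero, smul_zero, sub_zero]
    have : (fun x' : ℝ => max x' 0 ^ 2 - 0 ^ 2) =O[nhds 0] fun x' : ℝ => x' ^ 2 := by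
      refine Asymptotics.IsBigO.of_bound 1 (Filter.Eventually.of_forall fun x => ?_)
      rw [Real.norm_eq_abs, Real.norm_eq_abs]
      rcases le_total x 0 with h | h
      · rw [max_eq_right h]; simp; positivity
      · rw [max_eq_left h]; simp
    refine this.trans_isLittleO ?_
    simpa using (Asymptotics.isLittleO_pow_id (𝕜 := ℝ) (n := 2) (by norm_num))
  · have : (fun t : ℝ => max t 0 ^ 2) =ᶠ[nhds t] fun t => t ^ 2 := by
      filter_upwards [Ioi_mem_nhds h] with u hu
      rw [max_eq_left (le_of_lt hu)]
    rw [max_eq_left h.le]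
    simpa using (hasDerivAt_pow 2 t).congr_of_eventuallyEq this

lemma max_cube (t : ℝ) : max t 0 ^ 3 = t * max t 0 ^ 2 := by
  rcases le_total t 0 with h | h
  · rw [max_eq_right h]; simp
  · rw [max_eq_left h]; ring

lemma hasDerivAt_max_cube (t : ℝ) :
    HasDerivAt (fun t : ℝ => max t 0 ^ 3) (3 * max t 0 ^ 2) t := by
  have h := (hasDerivAt_id t).mul (hasDerivAt_max_sq t)
  have e : (fun t : ℝ => max t 0 ^ 3) = (id * fun t : ℝ => max t 0 ^ 2) := by
    funext t; simp [max_cube]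
  rw [e]
  refine h.congr_deriv ?_
  rcases le_total t 0 with h | h
  · rw [max_eq_right h]; simp
  · rw [max_eq_left h]; simp; ring

lemma contDiff_max_sq : ContDiff ℝ 1 (fun t : ℝ => max t 0 ^ 2) := by
  rw [contDiff_one_iff_deriv]
  refine ⟨fun t => (hasDerivAt_max_sq t).differentiableAt, ?_⟩
  rw [show deriv (fun t : ℝ => max t 0 ^ 2) = fun t => 2 * max t 0 from
    funext fun t => (hasDerivAt_max_sq t).deriv]
  fun_prop

lemma contDiff_max_cube : ContDiff ℝ 2 (fun t : ℝ => max t 0 ^ 3) := by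
  rw [show (2 : WithTop ℕ∞) = 1 + 1 by norm_num, contDiff_succ_iff_deriv]
  refine ⟨fun t => (hasDerivAt_max_cube t).differentiableAt, by simp, ?_⟩
  rw [show deriv (fun t : ℝ => max t 0 ^ 3) = fun t => 3 * max t 0 ^ 2 from
    funext fun t => (hasDerivAt_max_cube t).deriv]
  exact contDiff_const.mul contDiff_max_sq

/-- Averaging kernel of support radius `a`. -/
def rho {N : ℕ} (a : ℝ) (z : EuclideanSpace ℝ (Fin N)) : ℝ := max (a ^ 2 - ‖z‖ ^ 2) 0 ^ 2

/-- Potential of the averaging kernel. -/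
def rhoP {N : ℕ} (a : ℝ) (z : EuclideanSpace ℝ (Fin N)) : ℝ := max (a ^ 2 - ‖z‖ ^ 2) 0 ^ 3 / 6

lemma rho_nonneg {N : ℕ} (a : ℝ) (z : EuclideanSpace ℝ (Fin N)) : 0 ≤ rho a z := sq_nonneg _

lemma rhoP_nonneg {N : ℕ} (a : ℝ) (z : EuclideanSpace ℝ (Fin N)) : 0 ≤ rhoP a z := by
  unfold rhoP; positivity

lemma rho_zero {N : ℕ} {a : ℝ} {z : EuclideanSpace ℝ (Fin N)} (ha : 0 < a) (h : a ≤ ‖z‖) :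
    rho a z = 0 := by
  have : a ^ 2 - ‖z‖ ^ 2 ≤ 0 := by nlinarith
  simp [rho, max_eq_right this]

lemma rhoP_zero {N : ℕ} {a : ℝ} {z : EuclideanSpace ℝ (Fin N)} (ha : 0 < a) (h : a ≤ ‖z‖) :
    rhoP a z = 0 := by
  have : a ^ 2 - ‖z‖ ^ 2 ≤ 0 := by nlinarith
  simp [rhoP, max_eq_right this]

lemma rho_continuous {N : ℕ} (a : ℝ) : Continuous (rho (N := N) a) := by
  unfold rho; fun_prop

lemma hcs_of_zero' {N : ℕ} {a : ℝ} {f : EuclideanSpace ℝ (Fin N) → ℝ}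
    (h : ∀ z, a ≤ ‖z‖ → f z = 0) : HasCompactSupport f :=
  HasCompactSupport.intro (isCompact_closedBall 0 a) fun z hz => h z (by
    rw [mem_closedBall_zero_iff, not_le] at hz; exact hz.le)

lemma rho_hcs {N : ℕ} {a : ℝ} (ha : 0 < a) : HasCompactSupport (rho (N := N) a) :=
  hcs_of_zero' fun _ h => rho_zero ha h

lemma rhoP_hcs {N : ℕ} {a : ℝ} (ha : 0 < a) : HasCompactSupport (rhoP (N := N) a) :=
  hcs_of_zero' fun _ h => rhoP_zero ha h

lemma contDiff_nsq {N : ℕ} (a : ℝ) :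
    ContDiff ℝ 2 (fun z : EuclideanSpace ℝ (Fin N) => a ^ 2 - ‖z‖ ^ 2) :=
  contDiff_const.sub (contDiff_norm_sq ℝ)

lemma pd_nsq {N : ℕ} (a : ℝ) (i : Fin N) (z : EuclideanSpace ℝ (Fin N)) :
    pd i (fun z : EuclideanSpace ℝ (Fin N) => a ^ 2 - ‖z‖ ^ 2) z = - (2 * z i) := by
  have h := ((hasStrictFDerivAt_norm_sq z).hasFDerivAt.const_sub (a ^ 2)).fderiv
  simp only [pd]
  rw [h]
  simp [EuclideanSpace.inner_single_right]

lemma rhoP_contDiff {N : ℕ} (a : ℝ) : ContDiff ℝ 2 (rhoP (N := N) a) :=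
  (contDiff_max_cube.comp (contDiff_nsq a)).div_const 6

lemma pd_rhoP {N : ℕ} (a : ℝ) (i : Fin N) (z : EuclideanSpace ℝ (Fin N)) :
    pd i (rhoP a) z = - (z i * rho a z) := by
  have := pd_comp (F := fun t => max t 0 ^ 3 / 6) (F' := fun t => 3 * max t 0 ^ 2 / 6) i
    ((contDiff_nsq (N := N) a).of_le (by norm_num)) fun x => (hasDerivAt_max_cube _).div_const 6
  unfold rhoP
  rw [this]
  simp only [pd_nsq, rho]
  ring

lemma fderiv_eq_sum_pd {N : ℕ} (f : EuclideanSpace ℝ (Fin N) → ℝ)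
    (x z : EuclideanSpace ℝ (Fin N)) : fderiv ℝ f x z = ∑ i, z i * pd i f x := by
  have hz : z = ∑ i, z i • EuclideanSpace.single i (1:ℝ) := by
    ext j
    simp [Finset.sum_apply, Pi.single_apply]
  conv_lhs => rw [hz]
  simp [pd, map_sum]

lemma hasDerivAt_mean {N : ℕ} {w : EuclideanSpace ℝ (Fin N) → ℝ} (hw : ContDiff ℝ 2 w)
    (x : EuclideanSpace ℝ (Fin N)) {a : ℝ} (ha : 0 < a) (t : ℝ) :
    HasDerivAt (fun t : ℝ => ∫ z, w (x + t • z) * rho a z)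
      (∫ z, fderiv ℝ w (x + t • z) z * rho a z) t := by
  have hdw : Continuous (fderiv ℝ w) := hw.continuous_fderiv (by norm_num)
  have hcont : Continuous (fun q : ℝ × EuclideanSpace ℝ (Fin N) =>
      fderiv ℝ w (x + q.1 • q.2) q.2 * rho a q.2) :=
    ((hdw.comp (by fun_prop)).clm_apply continuous_snd).mul ((rho_continuous a).comp continuous_snd)
  obtain ⟨B, hB⟩ := ((isCompact_closedBall t 1).prod
    (isCompact_closedBall (0 : EuclideanSpace ℝ (Fin N)) a)).exists_bound_of_continuousOn
    hcont.continuousOn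
  have hwc := hw.continuous
  refine (hasDerivAt_integral_of_dominated_loc_of_deriv_le (μ := volume)
    (F := fun (t : ℝ) z => w (x + t • z) * rho a z)
    (F' := fun (t : ℝ) z => fderiv ℝ w (x + t • z) z * rho a z)
    (bound := (closedBall 0 a).indicator fun _ => B)
    (ball_mem_nhds t one_pos) ?_ ?_ ?_ ?_ ?_ ?_).2
  · exact Filter.Eventually.of_forall fun s =>
      ((hwc.comp (by fun_prop)).mul (rho_continuous a)).aestronglyMeasurable
  · exact ((hwc.comp (by fun_prop)).mul (rho_continuous a)).integrable_of_hasCompactSupport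
      (rho_hcs ha).mul_left
  · exact (((hdw.comp (by fun_prop)).clm_apply continuous_id).mul
      (rho_continuous a)).aestronglyMeasurable
  · refine Filter.Eventually.of_forall fun z s hs => ?_
    by_cases hz : z ∈ closedBall (0 : EuclideanSpace ℝ (Fin N)) a
    · rw [indicator_of_mem hz]
      exact hB (s, z) ⟨ball_subset_closedBall hs, hz⟩
    · rw [indicator_of_notMem hz]
      rw [mem_closedBall_zero_iff, not_le] at hz
      simp [rho_zero ha hz.le]
  · exact (integrable_indicator_iff measurableSet_closedBall).2
      (integrableOn_const (isCompact_closedBall _ _).measure_lt_top.ne)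
  · refine Filter.Eventually.of_forall fun z s _ => ?_
    have h1 : HasDerivAt (fun s : ℝ => x + s • z) z s := by
      simpa using ((hasDerivAt_id s).smul_const z).const_add x
    exact ((hw.differentiable (by norm_num) _).hasFDerivAt.comp_hasDerivAt s h1).mul_const _

lemma mean_value {N : ℕ} {w : EuclideanSpace ℝ (Fin N) → ℝ} (hw : ContDiff ℝ 2 w)
    (x : EuclideanSpace ℝ (Fin N)) {a r : ℝ} (ha : 0 < a) (hr : 0 < r)
    (h : ∀ z ∈ ball x (a * r), lap w z ≤ 0) :
    ∫ z, w (x + r • z) * rho a z ≤ w x * ∫ z : EuclideanSpace ℝ (Fin N), rho a z := by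
  have hanti : AntitoneOn (fun t : ℝ => ∫ z, w (x + t • z) * rho a z) (Icc 0 r) := by
    refine antitoneOn_of_deriv_nonpos (convex_Icc 0 r)
      (fun t _ => (hasDerivAt_mean hw x ha t).continuousAt.continuousWithinAt)
      (fun t _ => (hasDerivAt_mean hw x ha t).differentiableAt.differentiableWithinAt) ?_
    intro t ht
    rw [interior_Icc] at ht
    rw [(hasDerivAt_mean hw x ha t).deriv]
    have hpw : ∀ i, ContDiff ℝ 1 (fun z => pd i w (x + t • z)) := fun i =>
      (pd_contDiff i hw).comp (by fun_prop)
    have hP1 : ContDiff ℝ 1 (rhoP (N := N) a) := (rhoP_contDiff a).of_le (by norm_num)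
    have e1 : ∀ z, fderiv ℝ w (x + t • z) z * rho a z
        = ∑ i, - (pd i w (x + t • z) * pd i (rhoP a) z) := by
      intro z
      rw [fderiv_eq_sum_pd, Finset.sum_mul]
      refine Finset.sum_congr rfl fun i _ => ?_
      rw [pd_rhoP]; ring
    simp_rw [e1]
    rw [integral_finsetSum]
    · simp_rw [integral_neg, fun i => integral_mul_pd i (hpw i) hP1 (rhoP_hcs ha), neg_neg]
      rw [← integral_finsetSum]
      · refine integral_nonpos fun z => ?_
        simp only [Pi.zero_apply]
        have e2 : ∑ i, pd i (fun z => pd i w (x + t • z)) z * rhoP a z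
            = t * lap w (x + t • z) * rhoP a z := by
          simp_rw [fun i => pd_comp_affine i (pd_contDiff i hw) t x]
          rw [lap_eq, Finset.mul_sum, Finset.sum_mul]
        rw [e2]
        by_cases hz : a ≤ ‖z‖
        · simp [rhoP_zero ha hz]
        · push Not at hz
          have hm : x + t • z ∈ ball x (a * r) := by
            rw [mem_ball, dist_eq_norm, add_sub_cancel_left, norm_smul, Real.norm_eq_abs,
              abs_of_pos ht.1]
            have := norm_nonneg z
            have := ht.1; have := ht.2
            nlinarith
          exact mul_nonpos_of_nonpos_of_nonneg
            (mul_nonpos_of_nonneg_of_nonpos ht.1.le (h _ hm)) (rhoP_nonneg a z)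
      · intro i _
        exact ((pd_continuous i (hpw i)).mul hP1.continuous).integrable_of_hasCompactSupport
          (rhoP_hcs ha).mul_left
    · intro i _
      exact ((hpw i).continuous.mul (pd_continuous i hP1)).neg.integrable_of_hasCompactSupport
        ((pd_hasCompactSupport i (rhoP_hcs ha)).mul_left.neg)
  have := hanti (left_mem_Icc.2 hr.le) (right_mem_Icc.2 hr.le) hr.le
  simp only [zero_smul, add_zero] at this
  rwa [integral_const_mul] at this


/-- Convex `C²` regularisation of the positive part. -/
def cvx (ε t : ℝ) : ℝ := (max t 0 ^ 3 + ε ^ 3) ^ (1 / 3 : ℝ) - ε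

/-- First derivative of `cvx`. -/
def cvx' (ε t : ℝ) : ℝ := max t 0 ^ 2 * (max t 0 ^ 3 + ε ^ 3) ^ (-2 / 3 : ℝ)

/-- Second derivative of `cvx`. -/
def cvx'' (ε t : ℝ) : ℝ := 2 * max t 0 * (max t 0 ^ 3 + ε ^ 3) ^ (-2 / 3 : ℝ)
  + max t 0 ^ 2 * (3 * max t 0 ^ 2 * (-2 / 3 : ℝ) * (max t 0 ^ 3 + ε ^ 3) ^ (-2 / 3 - 1 : ℝ))

lemma cvx_base_pos {ε : ℝ} (hε : 0 < ε) (t : ℝ) : 0 < max t 0 ^ 3 + ε ^ 3 := by positivity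

lemma hasDerivAt_cvx {ε : ℝ} (hε : 0 < ε) (t : ℝ) : HasDerivAt (cvx ε) (cvx' ε t) t := by
  have h := (((hasDerivAt_max_cube t).add_const (ε ^ 3)).rpow_const (p := 1 / 3)
    (Or.inl (cvx_base_pos hε t).ne')).sub_const ε
  refine h.congr_deriv ?_
  unfold cvx'
  rw [show (1 / 3 - 1 : ℝ) = -2 / 3 by norm_num]; ring

lemma hasDerivAt_cvx' {ε : ℝ} (hε : 0 < ε) (t : ℝ) : HasDerivAt (cvx' ε) (cvx'' ε t) t := by
  have h := (hasDerivAt_max_sq t).mul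
    (((hasDerivAt_max_cube t).add_const (ε ^ 3)).rpow_const (p := -2 / 3)
    (Or.inl (cvx_base_pos hε t).ne'))
  exact h

lemma cvx'_nonneg {ε : ℝ} (hε : 0 < ε) (t : ℝ) : 0 ≤ cvx' ε t := by
  have := cvx_base_pos hε t
  unfold cvx'; positivity

lemma cvx'_zero {ε : ℝ} {t : ℝ} (ht : t ≤ 0) : cvx' ε t = 0 := by
  simp [cvx', max_eq_right ht]

lemma cvx''_nonneg {ε : ℝ} (hε : 0 < ε) (t : ℝ) : 0 ≤ cvx'' ε t := by
  have hb := cvx_base_pos hε t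
  have e : (max t 0 ^ 3 + ε ^ 3) ^ (-2 / 3 : ℝ)
      = (max t 0 ^ 3 + ε ^ 3) ^ (-2 / 3 - 1 : ℝ) * (max t 0 ^ 3 + ε ^ 3) := by
    nth_rewrite 3 [← Real.rpow_one (max t 0 ^ 3 + ε ^ 3)]
    rw [← Real.rpow_add hb]; norm_num
  have e2 : cvx'' ε t = 2 * max t 0 * ε ^ 3 * (max t 0 ^ 3 + ε ^ 3) ^ (-2 / 3 - 1 : ℝ) := by
    unfold cvx''
    rw [e]; ring
  rw [e2]
  positivity

lemma cvx_le {ε : ℝ} (hε : 0 < ε) (t : ℝ) : cvx ε t ≤ max t 0 := by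
  have hm : 0 ≤ max t 0 := le_max_right _ _
  have h1 : (max t 0 ^ 3 + ε ^ 3) ≤ (max t 0 + ε) ^ 3 := by
    have : 0 ≤ max t 0 * ε * (max t 0 + ε) := by positivity
    nlinarith
  have h2 := Real.rpow_le_rpow (cvx_base_pos hε t).le h1 (z := 1 / 3) (by norm_num)
  rw [← Real.rpow_natCast (max t 0 + ε) 3, ← Real.rpow_mul (by positivity)] at h2
  have e : (((3:ℕ):ℝ) * (1 / 3 : ℝ)) = 1 := by norm_num
  rw [e, Real.rpow_one] at h2
  unfold cvx
  linarith

lemma le_cvx {ε : ℝ} (hε : 0 < ε) (t : ℝ) : t - ε ≤ cvx ε t := by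
  have hm : 0 ≤ max t 0 := le_max_right _ _
  have h1 : max t 0 ^ 3 ≤ max t 0 ^ 3 + ε ^ 3 := by
    have : 0 < ε ^ 3 := by positivity
    linarith
  have h2 := Real.rpow_le_rpow (by positivity) h1 (z := 1 / 3) (by norm_num)
  rw [← Real.rpow_natCast (max t 0) 3, ← Real.rpow_mul hm] at h2
  norm_num at h2
  unfold cvx
  norm_num
  have := h2.1
  linarith

lemma cvx_contDiff {ε : ℝ} (hε : 0 < ε) : ContDiff ℝ 2 (cvx ε) :=
  ((contDiff_max_cube.add contDiff_const).rpow_const_of_ne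
    fun t => (cvx_base_pos hε t).ne').sub contDiff_const

lemma cvx'_contDiff {ε : ℝ} (hε : 0 < ε) : ContDiff ℝ 1 (cvx' ε) :=
  contDiff_max_sq.mul (((contDiff_max_cube.of_le (by norm_num)).add contDiff_const).rpow_const_of_ne
    fun t => (cvx_base_pos hε t).ne')

/-- The mean value inequality for the positive part of a function that is subharmonic
where it is positive. -/
lemma sub_mean {N : ℕ} {w U : EuclideanSpace ℝ (Fin N) → ℝ} (hw : ContDiff ℝ 2 w)
    (hU : Continuous U) (hU0 : ∀ x, 0 ≤ U x) (hwU : ∀ x, w x ≤ U x)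
    (x : EuclideanSpace ℝ (Fin N)) {r : ℝ} (hr : 0 < r)
    (h : ∀ z ∈ ball x r, 0 < w z → 0 ≤ lap w z) :
    w x * (∫ z : EuclideanSpace ℝ (Fin N), rho 1 z) ≤ ∫ z, U (x + r • z) * rho 1 z := by
  set I := ∫ z : EuclideanSpace ℝ (Fin N), rho 1 z with hI
  have hI0 : 0 ≤ I := integral_nonneg fun z => rho_nonneg 1 z
  have main : ∀ ε : ℝ, 0 < ε → (w x - ε) * I ≤ ∫ z, U (x + r • z) * rho 1 z := by
    intro ε hε
    have hF : ContDiff ℝ 2 (fun x => cvx ε (w x)) := (cvx_contDiff hε).comp hw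
    have hm := mean_value (w := fun x => -1 * cvx ε (w x)) (contDiff_const.mul hF) x one_pos hr
      (by
        intro z hz
        rw [one_mul] at hz
        rw [lap_const_mul _ hF, lap_comp hw (fun x => hasDerivAt_cvx hε _)
          (fun x => hasDerivAt_cvx' hε _) ((cvx'_contDiff hε).comp (hw.of_le (by norm_num)))]
        have h1 : 0 ≤ cvx'' ε (w z) * ∑ i, pd i w z ^ 2 :=
          mul_nonneg (cvx''_nonneg hε _) (Finset.sum_nonneg fun i _ => sq_nonneg _)
        have h2 : 0 ≤ cvx' ε (w z) * lap w z := by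
          rcases le_or_gt (w z) 0 with h0 | h0
          · rw [cvx'_zero h0, zero_mul]
          · exact mul_nonneg (cvx'_nonneg hε _) (h z hz h0)
        linarith)
    have h3 : cvx ε (w x) * I ≤ ∫ z, cvx ε (w (x + r • z)) * rho 1 z := by
      have e : ∀ z, -1 * cvx ε (w (x + r • z)) * rho 1 z
          = - (cvx ε (w (x + r • z)) * rho 1 z) := fun z => by ring
      simp_rw [e] at hm
      rw [integral_neg] at hm
      linarith
    calc (w x - ε) * I ≤ cvx ε (w x) * I := by gcongr; exact le_cvx hε _
      _ ≤ _ := h3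
      _ ≤ _ := by
        refine integral_mono ?_ ?_ fun z => ?_
        · exact ((hF.continuous.comp (by fun_prop)).mul
            (rho_continuous 1)).integrable_of_hasCompactSupport (rho_hcs one_pos).mul_left
        · exact ((hU.comp (by fun_prop)).mul
            (rho_continuous 1)).integrable_of_hasCompactSupport (rho_hcs one_pos).mul_left
        · have := rho_nonneg 1 z
          simp only []
          gcongr
          exact (cvx_le hε _).trans (max_le (hwU _) (hU0 _))
  refine le_of_forall_pos_le_add fun δ hδ => ?_
  have hI1 : 0 < I + 1 := by linarith
  have := main (δ / (I + 1)) (by positivity)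
  have h4 : δ / (I + 1) * I ≤ δ := by
    rw [div_mul_eq_mul_div, div_le_iff₀ hI1]; nlinarith
  nlinarith

lemma rho_integral_pos {N : ℕ} {a : ℝ} (ha : 0 < a) :
    0 < ∫ z : EuclideanSpace ℝ (Fin N), rho a z := by
  refine (rho_continuous a).integral_pos_of_hasCompactSupport_nonneg_nonzero (rho_hcs ha)
    (rho_nonneg a) (x := 0) ?_
  have : (0:ℝ) < a ^ 2 := by positivity
  simp [rho, max_eq_left this.le, ha.ne']

lemma sq_rho_integral_pos {N : ℕ} (hN : 1 ≤ N) :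
    0 < ∫ z : EuclideanSpace ℝ (Fin N), ‖z‖ ^ 2 * rho 1 z := by
  refine Continuous.integral_pos_of_hasCompactSupport_nonneg_nonzero
    (x := EuclideanSpace.single ⟨0, hN⟩ (1 / 2 : ℝ)) ?_ ?_ ?_ ?_
  · exact (continuous_norm.pow 2).mul (rho_continuous 1)
  · exact (rho_hcs one_pos).mul_left
  · exact fun z => mul_nonneg (by positivity) (rho_nonneg 1 z)
  · simp only [rho, EuclideanSpace.norm_single]
    norm_num

lemma integral_rho_shift {N : ℕ} (U : EuclideanSpace ℝ (Fin N) → ℝ)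
    (y ξ : EuclideanSpace ℝ (Fin N)) (r a : ℝ) :
    ∫ z, U ((y + r • ξ) + r • z) * rho a z = ∫ z, U (y + r • z) * rho a (z - ξ) := by
  rw [← integral_sub_right_eq_self (fun z => U ((y + r • ξ) + r • z) * rho a z) ξ]
  congr 1; funext z
  congr 2
  rw [smul_sub]; abel

lemma lap_nsq {N : ℕ} (x z : EuclideanSpace ℝ (Fin N)) :
    lap (fun z : EuclideanSpace ℝ (Fin N) => ‖z - x‖ ^ 2) z = 2 * N := by
  have hc : ContDiff ℝ 2 (fun z : EuclideanSpace ℝ (Fin N) => ‖z‖ ^ 2) := contDiff_norm_sq ℝ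
  have h1 := lap_comp_affine hc 1 (-x) z
  have e : (fun z : EuclideanSpace ℝ (Fin N) => ‖-x + (1:ℝ) • z‖ ^ 2) = fun z => ‖z - x‖ ^ 2 := by
    funext z; congr 2; simp; abel
  rw [e] at h1
  rw [h1, lap_eq]
  have h2 : ∀ i, pd i (fun z : EuclideanSpace ℝ (Fin N) => ‖z‖ ^ 2) = fun z => 2 * z i := by
    intro i; funext z
    have h := (hasStrictFDerivAt_norm_sq z).hasFDerivAt.fderiv
    simp only [pd]
    rw [h]
    simp [EuclideanSpace.inner_single_right]
  have h3 : ∀ (i : Fin N) (q : EuclideanSpace ℝ (Fin N)),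
      pd i (fun z : EuclideanSpace ℝ (Fin N) => 2 * z i) q = 2 := by
    intro i q
    have h := ((EuclideanSpace.proj i : EuclideanSpace ℝ (Fin N) →L[ℝ] ℝ).hasFDerivAt
      (x := q)).const_mul 2
    have h' : HasFDerivAt (fun z : EuclideanSpace ℝ (Fin N) => 2 * z i) _ q := h
    simp only [pd]
    rw [h'.fderiv]
    simp
  simp_rw [h2, h3]
  simp; ring

lemma harnack {N : ℕ} (hN : 1 ≤ N) {p θ lam gam ℓ σ : ℝ} (hθ : 1 < θ)
    (hlam : 0 < lam) (hgam : 0 < gam) (hℓ : 0 < ℓ) (hσ0 : 0 < σ) (hσ1 : σ ≤ 1)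
    (hσ : σ * (θ + 1) = p + 1) (hℓe : ℓ ^ (θ + 1) * σ * gam = lam) :
    ∃ c : ℝ, 0 < c ∧ ∀ (U V : EuclideanSpace ℝ (Fin N) → ℝ) (y : EuclideanSpace ℝ (Fin N)) (r : ℝ),
      ContDiff ℝ 2 U → ContDiff ℝ 2 V → (∀ x, 0 < U x) → (∀ x, 0 < V x) → 0 < r →
      (∀ x ∈ ball y (16 * r), -lap U x = lam * V x ^ p) →
      (∀ x ∈ ball y (16 * r), -lap V x = gam * U x ^ θ) →
      ∃ J : ℝ, 0 < J ∧ ∀ x ∈ closedBall y (2 * r),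
        U x ≤ J + ℓ * V x ^ σ ∧ c * J ^ θ * r ^ 2 ≤ V x := by
  set I1 := ∫ z : EuclideanSpace ℝ (Fin N), rho 1 z with hI1
  set I12 := ∫ z : EuclideanSpace ℝ (Fin N), rho 12 z with hI12
  set S1 := ∫ z : EuclideanSpace ℝ (Fin N), ‖z‖ ^ 2 * rho 1 z with hS1
  have hI1p : 0 < I1 := rho_integral_pos one_pos
  have hI12p : 0 < I12 := rho_integral_pos (by norm_num)
  have hS1p : 0 < S1 := sq_rho_integral_pos hN
  have hNp : (0:ℝ) < N := by exact_mod_cast hN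
  set c' := 108 ^ 2 * I1 / I12 with hc'
  have hc'p : 0 < c' := by positivity
  refine ⟨gam * c' ^ θ / (2 * N) * S1 / I1, by positivity, ?_⟩
  intro U V y r hU hV hU0 hV0 hr eU eV
  set D := closedBall (0 : EuclideanSpace ℝ (Fin N)) 3 with hD
  set J0 := ∫ z in D, U (y + r • z) with hJ0
  have hUc : Continuous (fun z => U (y + r • z)) := hU.continuous.comp (by fun_prop)
  have hDi : IntegrableOn (fun z => U (y + r • z)) D :=
    hUc.continuousOn.integrableOn_compact (isCompact_closedBall _ _)
  have hJ0p : 0 < J0 := by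
    refine (setIntegral_pos_iff_support_of_nonneg_ae
      (Filter.Eventually.of_forall fun z => (hU0 _).le) hDi).2 ?_
    have : Function.support (fun z => U (y + r • z)) ∩ D = D :=
      inter_eq_right.2 fun z _ => (hU0 _).ne'
    rw [this]
    exact measure_closedBall_pos _ _ (by norm_num)
  have hgeom : ∀ ξ : EuclideanSpace ℝ (Fin N), ∀ b q : ℝ, 0 ≤ q → ‖ξ‖ ≤ b → b + q ≤ 16 →
      ball (y + r • ξ) (q * r) ⊆ ball y (16 * r) := by
    intro ξ b q hq hξ hb z hz
    rw [mem_ball, dist_eq_norm] at hz ⊢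
    have h1 : z - y = (z - (y + r • ξ)) + r • ξ := by abel
    rw [h1]
    refine (norm_add_le _ _).trans_lt ?_
    rw [norm_smul, Real.norm_eq_abs, abs_of_pos hr]
    nlinarith
  -- lower bound for `U`
  have hlow : ∀ ξ : EuclideanSpace ℝ (Fin N), ‖ξ‖ ≤ 3 → 108 ^ 2 * J0 ≤ U (y + r • ξ) * I12 := by
    intro ξ hξ
    have h1 := mean_value hU (y + r • ξ) (a := 12) (r := r) (by norm_num) hr (fun z hz => by
      have hz' := hgeom ξ 3 12 (by norm_num) hξ (by norm_num) hz
      have := eU z hz'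
      have : 0 ≤ lam * V z ^ p := mul_nonneg hlam.le (Real.rpow_nonneg (hV0 z).le _)
      linarith)
    rw [integral_rho_shift] at h1
    refine le_trans ?_ h1
    rw [hJ0, ← integral_const_mul, ← integral_indicator measurableSet_closedBall]
    refine integral_mono ((integrable_indicator_iff measurableSet_closedBall).2
      (hDi.const_mul _)) ?_ fun z => ?_
    · refine (hUc.mul ((rho_continuous 12).comp (by fun_prop))).integrable_of_hasCompactSupport ?_
      refine hcs_of_zero' (a := 15) fun z hz => ?_
      have : 12 ≤ ‖z - ξ‖ := by
        have := norm_sub_norm_le z ξ; linarith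
      simp [rho_zero (by norm_num : (0:ℝ) < 12) this]
    · by_cases hz : z ∈ D
      · rw [indicator_of_mem hz]
        rw [hD, mem_closedBall_zero_iff] at hz
        have h6 : ‖z - ξ‖ ≤ 6 := (norm_sub_le _ _).trans (by linarith)
        have h0 := norm_nonneg (z - ξ)
        have h7 : (108:ℝ) ≤ max ((12:ℝ) ^ 2 - ‖z - ξ‖ ^ 2) 0 := le_max_of_le_left (by nlinarith)
        have h8 : (108:ℝ) ^ 2 ≤ rho 12 (z - ξ) := by unfold rho; gcongr
        have := hU0 (y + r • z)
        simp only []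
        nlinarith
      · rw [indicator_of_notMem hz]
        exact mul_nonneg (hU0 _).le (rho_nonneg _ _)
  -- upper bound for the averages
  have hup : ∀ ξ : EuclideanSpace ℝ (Fin N), ‖ξ‖ ≤ 2 →
      ∫ z, U ((y + r • ξ) + r • z) * rho 1 z ≤ J0 := by
    intro ξ hξ
    rw [integral_rho_shift, hJ0, ← integral_indicator measurableSet_closedBall]
    have hz0 : ∀ z : EuclideanSpace ℝ (Fin N), 3 ≤ ‖z‖ → rho 1 (z - ξ) = 0 := fun z hz => by
      have : 1 ≤ ‖z - ξ‖ := by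
        have := norm_sub_norm_le z ξ; linarith
      simp [rho_zero one_pos this]
    refine integral_mono ?_ ((integrable_indicator_iff measurableSet_closedBall).2 hDi) fun z => ?_
    · refine (hUc.mul ((rho_continuous 1).comp (by fun_prop))).integrable_of_hasCompactSupport ?_
      exact hcs_of_zero' (a := 3) fun z hz => by simp [hz0 z hz]
    · by_cases hz : z ∈ D
      · rw [indicator_of_mem hz]
        have h7 : max ((1:ℝ) ^ 2 - ‖z - ξ‖ ^ 2) 0 ≤ 1 := max_le (by nlinarith [norm_nonneg (z - ξ)])
          (by norm_num)
        have h8 : rho 1 (z - ξ) ≤ 1 := by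
          unfold rho; exact pow_le_one₀ (le_max_right _ _) h7
        have := hU0 (y + r • z)
        simp only []
        nlinarith
      · rw [indicator_of_notMem hz]
        rw [hD, mem_closedBall_zero_iff, not_le] at hz
        simp [hz0 z hz.le]
  refine ⟨J0 / I1, by positivity, ?_⟩
  intro x hx
  obtain ⟨ξ, hξ, rfl⟩ : ∃ ξ : EuclideanSpace ℝ (Fin N), ‖ξ‖ ≤ 2 ∧ x = y + r • ξ := by
    refine ⟨r⁻¹ • (x - y), ?_, ?_⟩
    · rw [mem_closedBall, dist_eq_norm] at hx
      rw [norm_smul, Real.norm_eq_abs, abs_of_pos (inv_pos.2 hr), inv_mul_le_iff₀ hr]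
      linarith
    · rw [smul_inv_smul₀ hr.ne']; abel
  constructor
  · -- comparison
    have hVσ : ContDiff ℝ 2 (fun x => V x ^ σ) := rpow_comp_contDiff hV hV0 σ
    have hVσ' : ContDiff ℝ 2 (fun x => (-ℓ) * V x ^ σ) := contDiff_const.mul hVσ
    have hsm := sub_mean (w := fun x => U x + (-ℓ) * V x ^ σ) (U := U) (hU.add hVσ') hU.continuous
      (fun x => (hU0 x).le)
      (fun x => by have := mul_pos hℓ (Real.rpow_pos_of_pos (hV0 x) σ); linarith)
      (y + r • ξ) hr (by
        intro z hz hpos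
        have hz' := hgeom ξ 2 1 (by norm_num) hξ (by norm_num) (by rwa [one_mul])
        rw [lap_add hU hVσ', lap_const_mul _ hVσ, lap_rpow hV hV0]
        have e1 := eU z hz'
        have e2 := eV z hz'
        have e1' : lap U z = - (lam * V z ^ p) := by linarith
        have e2' : lap V z = - (gam * U z ^ θ) := by linarith
        rw [e1', e2']
        have hv := hV0 z
        have t1 : 0 ≤ V z ^ (σ - 2) * ∑ i, pd i V z ^ 2 :=
          mul_nonneg (Real.rpow_nonneg hv.le _) (Finset.sum_nonneg fun i _ => sq_nonneg _)
        have t2 : 0 ≤ ℓ * σ * (1 - σ) * (V z ^ (σ - 2) * ∑ i, pd i V z ^ 2) :=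
          mul_nonneg (mul_nonneg (by positivity) (by linarith)) t1
        have t3 : (ℓ * V z ^ σ) ^ θ ≤ U z ^ θ :=
          Real.rpow_le_rpow (by positivity) (by linarith) (by linarith)
        have t4 : ℓ * σ * gam * V z ^ (σ - 1) * (ℓ * V z ^ σ) ^ θ = lam * V z ^ p := by
          rw [Real.mul_rpow hℓ.le (Real.rpow_nonneg hv.le _), ← Real.rpow_mul hv.le, ← hℓe,
            Real.rpow_add hℓ, Real.rpow_one]
          have : V z ^ p = V z ^ (σ - 1) * V z ^ (σ * θ) := by
            rw [← Real.rpow_add hv]; congr 1; linarith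
          rw [this]; ring
        have t5 : ℓ * σ * gam * V z ^ (σ - 1) * (ℓ * V z ^ σ) ^ θ
            ≤ ℓ * σ * gam * V z ^ (σ - 1) * U z ^ θ := by
          gcongr
        rw [t4] at t5
        nlinarith)
    have h1 := hsm.trans (hup ξ hξ)
    simp only [← hI1] at h1
    rw [← le_div_iff₀ hI1p] at h1
    linarith
  · -- lower bound for `V`
    set x := y + r • ξ with hx'
    set m := c' * (J0 / I1) with hm
    have hmp : 0 < m := by positivity
    have hUm : ∀ z ∈ ball x (1 * r), m ≤ U z := by
      intro z hz
      obtain ⟨ζ, hζ, rfl⟩ : ∃ ζ : EuclideanSpace ℝ (Fin N), ‖ζ‖ ≤ 3 ∧ z = y + r • ζ := by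
        refine ⟨r⁻¹ • (z - y), ?_, ?_⟩
        · rw [mem_ball, dist_eq_norm] at hz
          rw [mem_closedBall, dist_eq_norm] at hx
          rw [norm_smul, Real.norm_eq_abs, abs_of_pos (inv_pos.2 hr), inv_mul_le_iff₀ hr]
          have : ‖z - y‖ ≤ ‖z - x‖ + ‖x - y‖ := norm_sub_le_norm_sub_add_norm_sub _ _ _
          linarith
        · rw [smul_inv_smul₀ hr.ne']; abel
      have h1 := hlow ζ hζ
      rw [← div_le_iff₀ hI12p] at h1
      have : m = 108 ^ 2 * J0 / I12 := by
        rw [hm, hc']; field_simp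
      linarith
    set k := gam * m ^ θ / (2 * N) with hk
    have hkp : 0 < k := by positivity
    have hq : ContDiff ℝ 2 (fun z : EuclideanSpace ℝ (Fin N) => ‖z - x‖ ^ 2) :=
      (contDiff_id.sub contDiff_const).norm_sq ℝ
    have hmv := mean_value (w := fun z => V z + k * ‖z - x‖ ^ 2)
      (hV.add (contDiff_const.mul hq)) x one_pos hr (by
        intro z hz
        rw [lap_add hV (contDiff_const.mul hq), lap_const_mul _ hq, lap_nsq]
        have hz' := hgeom ξ 2 1 (by norm_num) hξ (by norm_num) hz
        have e2 := eV z hz'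
        have h1 : m ^ θ ≤ U z ^ θ := Real.rpow_le_rpow hmp.le (hUm z hz) (by linarith)
        have h2 : k * (2 * N) = gam * m ^ θ := by rw [hk]; field_simp
        have h3 : gam * m ^ θ ≤ gam * U z ^ θ := by gcongr
        linarith)
    simp only [sub_self, norm_zero, add_sub_cancel_left] at hmv
    have h5 : k * r ^ 2 * S1 ≤ ∫ z, (V (x + r • z) + k * ‖r • z‖ ^ 2) * rho 1 z := by
      rw [hS1, ← integral_const_mul]
      refine integral_mono ?_ ?_ fun z => ?_
      · exact (continuous_const.mul ((continuous_norm.pow 2).mul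
          (rho_continuous 1))).integrable_of_hasCompactSupport (rho_hcs one_pos).mul_left.mul_left
      · have hVc := hV.continuous
        exact (Continuous.mul (by fun_prop)
          (rho_continuous 1)).integrable_of_hasCompactSupport (rho_hcs one_pos).mul_left
      · have h6 : 0 ≤ V (x + r • z) * rho 1 z := mul_nonneg (hV0 _).le (rho_nonneg _ _)
        simp only [norm_smul, Real.norm_eq_abs, mul_pow, sq_abs]
        nlinarith
    have h6 := h5.trans hmv
    have e0 : V x + k * 0 ^ 2 = V x := by ring
    rw [e0, ← hI1, ← div_le_iff₀ hI1p] at h6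
    refine le_trans (le_of_eq ?_) h6
    rw [hk, hm, Real.mul_rpow hc'p.le (by positivity)]
    ring

lemma amgm_key {c1 c2 δ : ℝ} (h1 : 0 < c1) (h2 : 0 < c2) (h12 : c1 * c2 < 1)
    (hδ0 : 0 < δ) (hδ1 : δ < 1) :
    ∃ b κ c0 : ℝ, 1 < b ∧ 0 < κ ∧ 0 < c0 ∧ ∀ X Y : ℝ, 0 ≤ X → 0 ≤ Y →
      c0 * (X ^ δ * Y ^ (1 - δ)) ≤ X + κ * Y - c1 * (X ^ (1 - δ) * Y ^ δ)
        - κ * c2 * b * (X ^ δ * Y ^ (1 - δ)) := by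
  obtain ⟨b, hb1, hb2⟩ : ∃ b, 1 < b ∧ c1 * c2 * b < 1 := by
    have hpos : 0 < c1 * c2 := by positivity
    obtain ⟨b, hb, hb'⟩ := exists_between ((one_lt_div hpos).2 h12)
    refine ⟨b, hb, ?_⟩
    rw [lt_div_iff₀ hpos] at hb'
    linarith
  obtain ⟨q, hq1, hq2⟩ : ∃ q, c2 * b < q ∧ q < 1 / c1 := by
    apply exists_between
    rw [lt_div_iff₀ h1]
    linarith
  have hb0 : 0 < b := by linarith
  have hq0 : 0 < q := lt_trans (by positivity) hq1
  have hq2' : c1 * q < 1 := by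
    rw [lt_div_iff₀ h1] at hq2
    linarith
  set t := q ^ (1 / δ) with ht
  have ht0 : 0 < t := by positivity
  have htq : t ^ δ = q := by
    rw [ht, ← Real.rpow_mul hq0.le]
    field_simp
    simp
  have ht1 : t ^ (1 - δ) = t / q := by rw [Real.rpow_sub ht0, Real.rpow_one, htq]
  set a := max (c1 * q) (c2 * b / q) with ha
  have ha1 : a < 1 := max_lt hq2' ((div_lt_one hq0).2 hq1)
  have hA : ∀ X Y : ℝ, 0 ≤ X → 0 ≤ Y →
      X ^ (1 - δ) * Y ^ δ ≤ (1 - δ) * (q * X) + δ * (q / t * Y) := by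
    intro X Y hX hY
    have h := Real.geom_mean_le_arith_mean2_weighted (w₁ := 1 - δ) (w₂ := δ) (p₁ := q * X)
      (p₂ := q / t * Y) (by linarith) hδ0.le (by positivity) (by positivity) (by ring)
    rw [Real.mul_rpow hq0.le hX, Real.mul_rpow (by positivity) hY, Real.div_rpow hq0.le ht0.le,
      htq] at h
    have e : q ^ (1 - δ) * (q ^ δ / q) = 1 := by
      rw [mul_div_assoc', ← Real.rpow_add hq0]
      simp [hq0.ne']
    calc X ^ (1 - δ) * Y ^ δ = (q ^ (1 - δ) * (q ^ δ / q)) * (X ^ (1 - δ) * Y ^ δ) := by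
          rw [e, one_mul]
      _ = q ^ (1 - δ) * X ^ (1 - δ) * (q ^ δ / q * Y ^ δ) := by ring
      _ ≤ _ := h
  have hB : ∀ X Y : ℝ, 0 ≤ X → 0 ≤ Y →
      X ^ δ * Y ^ (1 - δ) ≤ δ * (t / q * X) + (1 - δ) * (1 / q * Y) := by
    intro X Y hX hY
    have h := Real.geom_mean_le_arith_mean2_weighted (w₁ := δ) (w₂ := 1 - δ) (p₁ := t / q * X)
      (p₂ := 1 / q * Y) hδ0.le (by linarith) (by positivity) (by positivity) (by ring)
    rw [Real.mul_rpow (by positivity) hX, Real.mul_rpow (by positivity) hY,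
      Real.div_rpow ht0.le hq0.le, htq, Real.div_rpow zero_le_one hq0.le, Real.one_rpow] at h
    have e : (q / q ^ δ) * (1 / q ^ (1 - δ)) = 1 := by
      rw [div_mul_div_comm, ← Real.rpow_add hq0]
      simp [hq0.ne']
    calc X ^ δ * Y ^ (1 - δ) = ((q / q ^ δ) * (1 / q ^ (1 - δ))) * (X ^ δ * Y ^ (1 - δ)) := by
          rw [e, one_mul]
      _ = (q / q ^ δ) * X ^ δ * (1 / q ^ (1 - δ) * Y ^ (1 - δ)) := by ring
      _ ≤ _ := h
  refine ⟨b, 1 / t, (1 - a) * (q / t), hb1, by positivity,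
    mul_pos (by linarith) (by positivity), fun X Y hX hY => ?_⟩
  have hA' := hA X Y hX hY
  have hB' := hB X Y hX hY
  set Aa := X ^ (1 - δ) * Y ^ δ
  set Bb := X ^ δ * Y ^ (1 - δ)
  have k1 : c1 * Aa ≤ a * ((1 - δ) * X + δ * (Y / t)) := by
    have hz : 0 ≤ (1 - δ) * X + δ * (Y / t) :=
      add_nonneg (mul_nonneg (by linarith) hX) (by positivity)
    calc c1 * Aa ≤ c1 * ((1 - δ) * (q * X) + δ * (q / t * Y)) := by gcongr
      _ = (c1 * q) * ((1 - δ) * X + δ * (Y / t)) := by ring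
      _ ≤ _ := by gcongr; exact le_max_left _ _
  have hB2 : q / t * Bb ≤ δ * X + (1 - δ) * (Y / t) := by
    calc q / t * Bb ≤ q / t * (δ * (t / q * X) + (1 - δ) * (1 / q * Y)) := by gcongr
      _ = _ := by field_simp
  have hz2 : 0 ≤ δ * X + (1 - δ) * (Y / t) :=
      add_nonneg (by positivity) (mul_nonneg (by linarith) (by positivity))
  have k2 : 1 / t * c2 * b * Bb ≤ a * (δ * X + (1 - δ) * (Y / t)) := by
    calc 1 / t * c2 * b * Bb = (c2 * b / q) * (q / t * Bb) := by field_simp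
      _ ≤ (c2 * b / q) * (δ * X + (1 - δ) * (Y / t)) := by gcongr
      _ ≤ _ := by gcongr; exact le_max_right _ _
  have k3 : (1 - a) * (q / t) * Bb ≤ (1 - a) * (X + Y / t) := by
    rw [mul_assoc]
    refine mul_le_mul_of_nonneg_left (hB2.trans ?_) (by linarith)
    have hYt : 0 ≤ Y / t := by positivity
    nlinarith
  have e : 1 / t * Y = Y / t := by ring
  rw [e]
  nlinarith

lemma exponents_key {p θ lam gam s : ℝ} (hp : 1 < p) (hpθ : p ≤ θ) (hlam : 0 < lam)
    (hgam : 0 < gam) (hs : (p + 1) / 2 < s) (hL : Lpoly p θ s < 0) {m n S : ℝ}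
    (hm : m = s * (θ + 1) / (2 * (p + 1))) (hn : n = s / 2)
    (hS : S = Real.sqrt (lam * gam * p * θ)) :
    1 / 2 < m ∧ 1 / 2 < n ∧ 0 < S ∧
    m ^ 2 / (2 * m - 1) * (lam / S) * (n ^ 2 / (2 * n - 1) * (gam / S)) < 1 := by
  have hθ : 1 < θ := by linarith
  have hs1 : 1 < s := by linarith
  have hp1 : 0 < p + 1 := by linarith
  have hθ1 : 0 < θ + 1 := by linarith
  have hm1 : 1 / 2 < m := by
    rw [hm, lt_div_iff₀ (by positivity)]
    nlinarith
  have hn1 : 1 / 2 < n := by rw [hn]; linarith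
  have hS0 : 0 < S := by rw [hS]; apply Real.sqrt_pos.2; positivity
  have hS2 : S * S = lam * gam * p * θ := by rw [hS]; exact Real.mul_self_sqrt (by positivity)
  refine ⟨hm1, hn1, hS0, ?_⟩
  have h2m : 0 < 2 * m - 1 := by linarith
  have h2n : 0 < 2 * n - 1 := by linarith
  have e : m ^ 2 / (2 * m - 1) * (lam / S) * (n ^ 2 / (2 * n - 1) * (gam / S))
      = (m ^ 2 * n ^ 2) / ((2 * m - 1) * (2 * n - 1) * (p * θ)) := by
    have : m ^ 2 / (2 * m - 1) * (lam / S) * (n ^ 2 / (2 * n - 1) * (gam / S))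
      = (m ^ 2 * n ^ 2 * (lam * gam)) / ((2 * m - 1) * (2 * n - 1) * (S * S)) := by
      field_simp
    rw [this, hS2]
    field_simp
  rw [e, div_lt_one (by positivity)]
  have hL' : s ^ 4 * (θ + 1) ^ 2 < 16 * p * θ * (p + 1) * (s - 1) * (s * (θ + 1) - (p + 1)) := by
    have : Lpoly p θ s * (θ + 1) ^ 2 = s ^ 4 * (θ + 1) ^ 2
        - 16 * p * θ * (p + 1) * (s - 1) * (s * (θ + 1) - (p + 1)) := by
      unfold Lpoly; field_simp; ring
    have h3 : Lpoly p θ s * (θ + 1) ^ 2 < 0 := mul_neg_of_neg_of_pos hL (by positivity)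
    linarith
  have e1 : m ^ 2 * n ^ 2 = s ^ 4 * (θ + 1) ^ 2 / (16 * (p + 1) ^ 2) := by
    rw [hm, hn]; field_simp; ring
  have e2 : (2 * m - 1) * (2 * n - 1) * (p * θ)
      = 16 * p * θ * (p + 1) * (s - 1) * (s * (θ + 1) - (p + 1)) / (16 * (p + 1) ^ 2) := by
    rw [hm, hn]; field_simp
  rw [e1, e2]
  exact div_lt_div_of_pos_right hL' (by positivity)

lemma split_pow {b θ : ℝ} (hb : 1 < b) (hθ : 0 < θ) :
    ∃ K : ℝ, 0 < K ∧ ∀ U W J : ℝ, 0 ≤ U → 0 ≤ W → 0 ≤ J → U ≤ W + J →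
      U ^ θ ≤ b * W ^ θ + K * J ^ θ := by
  set ε := b ^ (1 / θ) - 1 with hε
  have hε0 : 0 < ε := by
    have : 1 < b ^ (1 / θ) := Real.one_lt_rpow hb (by positivity)
    linarith
  have hb' : (1 + ε) ^ θ = b := by
    have : 1 + ε = b ^ (1 / θ) := by rw [hε]; ring
    rw [this, ← Real.rpow_mul (by linarith)]
    field_simp
    simp
  refine ⟨(1 + 1 / ε) ^ θ, by positivity, fun U W J hU hW hJ h => ?_⟩
  have hWt : 0 ≤ W ^ θ := by positivity
  have hJt : 0 ≤ J ^ θ := by positivity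
  have hK : 0 ≤ (1 + 1 / ε) ^ θ * J ^ θ := by positivity
  have hK' : 0 ≤ b * W ^ θ := by positivity
  rcases le_total J (ε * W) with hc | hc
  · have h1 : U ≤ (1 + ε) * W := by linarith
    have h2 := Real.rpow_le_rpow hU h1 hθ.le
    rw [Real.mul_rpow (by positivity) hW, hb'] at h2
    linarith
  · have h1 : U ≤ (1 + 1 / ε) * J := by
      have : W ≤ 1 / ε * J := by
        rw [one_div, ← div_eq_inv_mul, le_div_iff₀ hε0]; linarith
      linarith
    have h2 := Real.rpow_le_rpow hU h1 hθ.le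
    rw [Real.mul_rpow (by positivity) hJ] at h2
    linarith

/-- The interpolation identities between the four integrands. -/
lemma interp {p θ s m δ W V : ℝ} (hp : 1 < p) (hs : 0 < s)
    (hm : m = s * (θ + 1) / (2 * (p + 1))) (hδ : δ = (p + 1) / (2 * s))
    (hW : 0 < W) (hV : 0 < V) :
    (V ^ ((p - 1) / 2) * W ^ ((θ - 1) / 2) * W ^ (2 * m)) ^ (1 - δ)
      * (V ^ ((p - 1) / 2) * W ^ ((θ - 1) / 2) * V ^ s) ^ δ = W ^ (2 * m - 1) * V ^ p ∧
    (V ^ ((p - 1) / 2) * W ^ ((θ - 1) / 2) * W ^ (2 * m)) ^ δ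
      * (V ^ ((p - 1) / 2) * W ^ ((θ - 1) / 2) * V ^ s) ^ (1 - δ) = W ^ θ * V ^ (s - 1) := by
  have hp1 : p + 1 ≠ 0 := by linarith
  obtain ⟨a, rfl⟩ : ∃ a, W = Real.exp a := ⟨Real.log W, (Real.exp_log hW).symm⟩
  obtain ⟨c, rfl⟩ : ∃ c, V = Real.exp c := ⟨Real.log V, (Real.exp_log hV).symm⟩
  simp only [← Real.exp_mul, ← Real.exp_add]
  constructor
  · congr 1; rw [hm, hδ]; field_simp; ring
  · congr 1; rw [hm, hδ]; field_simp; ring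

lemma cutoff {N : ℕ} : ∃ K : ℝ, 0 < K ∧ ∀ (y : EuclideanSpace ℝ (Fin N)) (r : ℝ), 0 < r →
    ∃ η : EuclideanSpace ℝ (Fin N) → ℝ, ContDiff ℝ 2 η ∧ HasCompactSupport η ∧
      tsupport η ⊆ closedBall y (2 * r) ∧ (∀ x, 0 ≤ η x) ∧ (∀ x, η x ≤ 1) ∧
      (∀ x ∈ ball y r, η x = 1) ∧ (∀ x, |lap (fun x => η x ^ 2) x| ≤ K / r ^ 2) ∧
      (∀ x, |η x * lap η x| ≤ K / r ^ 2) := by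
  set f : ContDiffBump (0 : EuclideanSpace ℝ (Fin N)) := ⟨1, 2, one_pos, by norm_num⟩ with hf
  have hfc : ContDiff ℝ 2 f := f.contDiff
  have hf2c : ContDiff ℝ 2 (fun x => f x ^ 2) := hfc.pow 2
  have hcs : HasCompactSupport f := f.hasCompactSupport
  have b1 : HasCompactSupport (lap f) := hcs_of_zero hcs fun x hx => lap_zero_of_notMem hx
  have b2 : HasCompactSupport (lap fun x => f x ^ 2) :=
    hcs_of_zero (f := fun x => f x ^ 2) (hcs.comp_left (g := fun t : ℝ => t ^ 2) (by norm_num))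
      fun x hx => lap_zero_of_notMem hx
  obtain ⟨K1, hK1⟩ := b1.exists_bound_of_continuous (lap_continuous hfc)
  obtain ⟨K2, hK2⟩ := b2.exists_bound_of_continuous (lap_continuous hf2c)
  have hK10 : 0 ≤ K1 := (norm_nonneg _).trans (hK1 0)
  have hK20 : 0 ≤ K2 := (norm_nonneg _).trans (hK2 0)
  refine ⟨K1 + K2 + 1, by positivity, fun y r hr => ?_⟩
  have hnorm : ∀ x, ‖(-(r⁻¹ • y) + r⁻¹ • x)‖ = r⁻¹ * dist x y := by
    intro x
    rw [dist_eq_norm, ← abs_of_pos (inv_pos.2 hr), ← Real.norm_eq_abs, ← norm_smul]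
    rw [Real.norm_eq_abs, abs_of_pos (inv_pos.2 hr)]
    congr 1
    rw [smul_sub]; abel
  have hcont : ContDiff ℝ 2 (fun x => f (-(r⁻¹ • y) + r⁻¹ • x)) :=
    hfc.comp (contDiff_const.add (contDiff_id.const_smul _))
  have hzero : ∀ x, x ∉ closedBall y (2 * r) → f (-(r⁻¹ • y) + r⁻¹ • x) = 0 := by
    intro x hx
    apply f.zero_of_le_dist
    rw [dist_zero_right, hnorm]
    rw [mem_closedBall, not_le] at hx
    change 2 ≤ _
    rw [← div_eq_inv_mul, le_div_iff₀ hr]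
    exact hx.le
  have hts : tsupport (fun x => f (-(r⁻¹ • y) + r⁻¹ • x)) ⊆ closedBall y (2 * r) := by
    refine closure_minimal (fun x hx => ?_) isClosed_closedBall
    by_contra h; exact hx (hzero x h)
  refine ⟨fun x => f (-(r⁻¹ • y) + r⁻¹ • x), hcont,
    (isCompact_closedBall y (2 * r)).of_isClosed_subset (isClosed_tsupport _) hts, hts,
    fun x => f.nonneg, fun x => f.le_one, fun x hx => ?_, fun x => ?_, fun x => ?_⟩
  · apply f.one_of_mem_closedBall
    rw [mem_closedBall, dist_zero_right, hnorm]
    change _ ≤ (1:ℝ)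
    rw [← div_eq_inv_mul, div_le_one hr]
    exact (mem_ball.1 hx).le
  · rw [lap_comp_affine hf2c r⁻¹ (-(r⁻¹ • y)) x, abs_mul, abs_of_nonneg (by positivity), inv_pow,
      ← div_eq_inv_mul]
    have := hK2 (-(r⁻¹ • y) + r⁻¹ • x)
    rw [Real.norm_eq_abs] at this
    gcongr
    linarith
  · rw [lap_comp_affine hfc r⁻¹ (-(r⁻¹ • y)) x, abs_mul, abs_mul,
      abs_of_nonneg (a := r⁻¹ ^ 2) (by positivity), inv_pow, ← div_eq_inv_mul]
    have := hK1 (-(r⁻¹ • y) + r⁻¹ • x)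
    rw [Real.norm_eq_abs] at this
    have h1 : |f (-(r⁻¹ • y) + r⁻¹ • x)| ≤ 1 := by
      rw [abs_of_nonneg f.nonneg]; exact f.le_one
    calc _ ≤ 1 * (|lap f (-(r⁻¹ • y) + r⁻¹ • x)| / r ^ 2) := by gcongr
      _ ≤ _ := by rw [one_mul]; gcongr; linarith

lemma smooth_max {N : ℕ} {U : EuclideanSpace ℝ (Fin N) → ℝ} (hU : ContDiff ℝ 2 U) (J : ℝ)
    {κ : ℝ} (hκ : 0 < κ) :
    ∃ W : EuclideanSpace ℝ (Fin N) → ℝ, ContDiff ℝ 2 W ∧ (∀ x, 0 < W x) ∧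
      (∀ x, U x ≤ W x + J) ∧ (∀ x, W x ≤ max (U x - J) 0 + κ) ∧
      ∀ x, 0 ≤ -lap U x → -lap W x ≤ -lap U x := by
  have hpos : ∀ t : ℝ, 0 < (t - J) ^ 2 + κ ^ 2 := fun t => by positivity
  have hsq : ∀ t : ℝ, 0 < √((t - J) ^ 2 + κ ^ 2) := fun t => Real.sqrt_pos.2 (hpos t)
  have hss : ∀ t : ℝ, √((t - J) ^ 2 + κ ^ 2) ^ 2 = (t - J) ^ 2 + κ ^ 2 :=
    fun t => Real.sq_sqrt (hpos t).le
  have hgt : ∀ t : ℝ, |t - J| < √((t - J) ^ 2 + κ ^ 2) := fun t => by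
    apply Real.lt_sqrt_of_sq_lt
    rw [sq_abs]
    have : 0 < κ ^ 2 := by positivity
    linarith
  have hle : ∀ t : ℝ, √((t - J) ^ 2 + κ ^ 2) ≤ |t - J| + κ := fun t => by
    apply Real.sqrt_le_iff.2 ⟨by positivity, ?_⟩
    have := abs_nonneg (t - J)
    have e := sq_abs (t - J)
    nlinarith
  have hd1 : ∀ t : ℝ, HasDerivAt (fun t => √((t - J) ^ 2 + κ ^ 2))
      ((t - J) / √((t - J) ^ 2 + κ ^ 2)) t := by
    intro t
    have h1 : HasDerivAt (fun t : ℝ => (t - J) ^ 2 + κ ^ 2) (2 * (t - J)) t := by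
      have := ((((hasDerivAt_id t).sub_const J).pow 2).add_const (κ ^ 2))
      simpa using this
    have h2 := h1.sqrt (hpos t).ne'
    convert h2 using 1
    have := hsq t
    field_simp
  have hsc : ContDiff ℝ 2 (fun x => √((U x - J) ^ 2 + κ ^ 2)) :=
    (((hU.sub contDiff_const).pow 2).add contDiff_const).sqrt fun x => (hpos _).ne'
  set F : ℝ → ℝ := fun t => (t - J + √((t - J) ^ 2 + κ ^ 2)) / 2 with hF
  set F' : ℝ → ℝ := fun t => (1 + (t - J) / √((t - J) ^ 2 + κ ^ 2)) / 2 with hF'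
  set F'' : ℝ → ℝ := fun t => κ ^ 2 / (2 * √((t - J) ^ 2 + κ ^ 2) ^ 3) with hF''
  have hFd : ∀ t, HasDerivAt F (F' t) t := fun t => by
    have := ((((hasDerivAt_id t).sub_const J).add (hd1 t)).div_const 2)
    exact this
  have hFd' : ∀ t, HasDerivAt F' (F'' t) t := fun t => by
    have h := ((((hasDerivAt_id t).sub_const J).div (hd1 t) (hsq t).ne').const_add 1).div_const 2
    refine HasDerivAt.congr_deriv h ?_
    simp only [hF'', id]
    have h0 := (hsq t)
    have h1 := hss t
    set q := √((t - J) ^ 2 + κ ^ 2)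
    field_simp
    nlinarith
  refine ⟨fun x => F (U x), ?_, fun x => ?_, fun x => ?_, fun x => ?_, fun x hx => ?_⟩
  · exact ((hU.sub contDiff_const).add hsc).div_const 2
  · have := hgt (U x)
    have := neg_abs_le (U x - J)
    simp only [hF]; linarith
  · have := hgt (U x)
    have := le_abs_self (U x - J)
    simp only [hF]; linarith
  · have := hle (U x)
    simp only [hF]
    rcases le_total 0 (U x - J) with h | h
    · rw [max_eq_left h]; rw [abs_of_nonneg h] at this; linarith
    · rw [max_eq_right h]; rw [abs_of_nonpos h] at this; linarith
  · have hC : ContDiff ℝ 1 (fun x => F' (U x)) :=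
      ((contDiff_const.add ((hU.sub contDiff_const).div hsc fun x => (hsq _).ne')).div_const
        2).of_le (by norm_num)
    rw [lap_comp hU (fun x => hFd (U x)) (fun x => hFd' (U x)) hC x]
    have h1 : 0 ≤ F'' (U x) * ∑ i, pd i U x ^ 2 := by
      have := hsq (U x)
      simp only [hF'']
      positivity
    have h2 : F' (U x) ≤ 1 := by
      have h3 : (U x - J) / √((U x - J) ^ 2 + κ ^ 2) ≤ 1 := by
        rw [div_le_one (hsq _)]
        exact (le_abs_self _).trans (hgt _).le
      simp only [hF']; linarith
    nlinarith

lemma int_cc {N : ℕ} {h η : EuclideanSpace ℝ (Fin N) → ℝ} (hh : Continuous h)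
    (hη : Continuous η) (hc : HasCompactSupport η) : Integrable (fun x => h x * η x ^ 2) := by
  refine (hh.mul (hη.pow 2)).integrable_of_hasCompactSupport ?_
  exact hcs_of_zero hc fun x hx => by simp [image_eq_zero_of_notMem_tsupport hx]

lemma int_mono_cc {N : ℕ} {h k η : EuclideanSpace ℝ (Fin N) → ℝ} (hh : Continuous h)
    (hk : Continuous k) (hη : Continuous η) (hc : HasCompactSupport η)
    (hle : ∀ x ∈ tsupport η, h x ≤ k x) : ∫ x, h x * η x ^ 2 ≤ ∫ x, k x * η x ^ 2 := by
  refine integral_mono (int_cc hh hη hc) (int_cc hk hη hc) fun x => ?_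
  by_cases hx : x ∈ tsupport η
  · exact mul_le_mul_of_nonneg_right (hle x hx) (by positivity)
  · simp [image_eq_zero_of_notMem_tsupport hx]

lemma int_lin_cc {N : ℕ} {f1 f2 f3 f4 η : EuclideanSpace ℝ (Fin N) → ℝ} (c1 c2 c3 c4 : ℝ)
    (h1 : Continuous f1) (h2 : Continuous f2) (h3 : Continuous f3) (h4 : Continuous f4)
    (hη : Continuous η) (hc : HasCompactSupport η) :
    ∫ x, (c1 * f1 x + c2 * f2 x + c3 * f3 x + c4 * f4 x) * η x ^ 2
      = c1 * (∫ x, f1 x * η x ^ 2) + c2 * (∫ x, f2 x * η x ^ 2) + c3 * (∫ x, f3 x * η x ^ 2)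
        + c4 * ∫ x, f4 x * η x ^ 2 := by
  rw [← integral_const_mul (r := c4),
    ← integral_lin4 (int_cc h1 hη hc) (int_cc h2 hη hc) (int_cc h3 hη hc)
    ((int_cc h4 hη hc).const_mul c4)]
  congr 1
  funext x
  ring

lemma int_bd {N : ℕ} {h k : EuclideanSpace ℝ (Fin N) → ℝ} (hh : Continuous h) (hk : Continuous k)
    (hk0 : ∀ x, 0 ≤ k x) {y : EuclideanSpace ℝ (Fin N)} {r ρ D : ℝ} (hr : r < ρ) (hD : 0 ≤ D)
    (hz : ∀ x, x ∉ closedBall y r → h x = 0) (hle : ∀ x ∈ closedBall y r, h x ≤ D * k x) :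
    ∫ x, h x ≤ D * ∫ x in ball y ρ, k x := by
  have hsub : closedBall y r ⊆ ball y ρ := closedBall_subset_ball hr
  have hi : ∀ {f : EuclideanSpace ℝ (Fin N) → ℝ}, Continuous f → IntegrableOn f (ball y ρ) :=
    fun hf => (hf.continuousOn.integrableOn_compact (isCompact_closedBall y ρ)).mono_set
      ball_subset_closedBall
  rw [← setIntegral_eq_integral_of_forall_compl_eq_zero (s := ball y ρ)
    fun x hx => hz x fun h => hx (hsub h), ← integral_const_mul]
  refine setIntegral_mono_on (hi hh) ((hi hk).const_mul D) measurableSet_ball fun x _ => ?_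
  by_cases hx : x ∈ closedBall y r
  · exact hle x hx
  · rw [hz x hx]; exact mul_nonneg hD (hk0 x)

/-- Energy estimate with the error term estimated. -/
lemma energy_bd {N : ℕ} {W V g η : EuclideanSpace ℝ (Fin N) → ℝ} (hW : ContDiff ℝ 2 W)
    (hpos : ∀ x, 0 < W x) (hη : ContDiff ℝ 2 η) (hg : Continuous g)
    (hV : ContDiff ℝ 2 V) (hVpos : ∀ x, 0 < V x)
    {y : EuclideanSpace ℝ (Fin N)} {r K M m s : ℝ} (hr : 0 < r) (hK : 0 < K) (hM : 0 < M)
    (hc : HasCompactSupport η)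
    (hts : tsupport η ⊆ closedBall y (2 * r))
    (hb1 : ∀ x, |lap (fun x => η x ^ 2) x| ≤ K / r ^ 2) (hb2 : ∀ x, |η x * lap η x| ≤ K / r ^ 2)
    (hm : 1 / 2 < m) (hgW : ∀ x ∈ closedBall y (2 * r), -lap W x ≤ g x)
    (hWV : ∀ x ∈ closedBall y (2 * r), W x ^ (2 * m) ≤ M * V x ^ s) :
    ∫ x, ∑ i, pd i (fun x => W x ^ m * η x) x ^ 2
      ≤ m ^ 2 / (2 * m - 1) * (∫ x, W x ^ (2 * m - 1) * g x * η x ^ 2)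
        + M * ((m / (2 * (2 * m - 1)) + 1) * (K / r ^ 2)) * ∫ x in ball y (16 * r), V x ^ s := by
  refine (energy hW hpos hη hc hg hm fun x hx => hgW x (hts hx)).trans
    (add_le_add_right ?_ _)
  have h2m : 0 < 2 * m - 1 := by linarith
  have hm0 : 0 < m := by linarith
  refine int_bd (r := 2 * r) ?_ (rpow_comp_contDiff hV hVpos s).continuous
    (fun x => (Real.rpow_pos_of_pos (hVpos x) s).le) (by linarith) (by positivity) (fun x hx => ?_)
    fun x hx => ?_
  · exact (rpow_comp_contDiff hW hpos _).continuous.mul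
      ((continuous_const.mul (lap_continuous (hη.pow 2))).sub
        (hη.continuous.mul (lap_continuous hη)))
  · have h1 : x ∉ tsupport η := fun h => hx (hts h)
    have h2 : x ∉ tsupport (fun x => η x ^ 2) := fun h => h1
      (closure_mono (fun z hz => by
        simp only [Function.mem_support] at hz ⊢
        intro h; exact hz (by rw [h]; norm_num)) h)
    rw [lap_zero_of_notMem h1, lap_zero_of_notMem h2]; simp
  · have e1 : m / (2 * (2 * m - 1)) * lap (fun x => η x ^ 2) x - η x * lap η x
        ≤ (m / (2 * (2 * m - 1)) + 1) * (K / r ^ 2) := by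
      have a1 := (le_abs_self _).trans (hb1 x)
      have a2 := (neg_le_abs _).trans (hb2 x)
      have : m / (2 * (2 * m - 1)) * lap (fun x => η x ^ 2) x
          ≤ m / (2 * (2 * m - 1)) * (K / r ^ 2) := by gcongr
      linarith
    have w0 : 0 ≤ W x ^ (2 * m) := (Real.rpow_pos_of_pos (hpos x) _).le
    calc _ ≤ W x ^ (2 * m) * ((m / (2 * (2 * m - 1)) + 1) * (K / r ^ 2)) := by gcongr
      _ ≤ M * V x ^ s * ((m / (2 * (2 * m - 1)) + 1) * (K / r ^ 2)) := by
        gcongr; exact hWV x hx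
      _ = _ := by ring

set_option maxHeartbeats 2000000 in
lemma local_est {N : ℕ} (hN : 1 ≤ N) {p θ lam gam s : ℝ} (hp : 1 < p) (hpθ : p ≤ θ)
    (hlam : 0 < lam) (hgam : 0 < gam) (hs : (p + 1) / 2 < s) (hL : Lpoly p θ s < 0) :
    ∃ C : ℝ, 0 < C ∧ ∀ (U V : EuclideanSpace ℝ (Fin N) → ℝ) (y : EuclideanSpace ℝ (Fin N)) (r : ℝ),
      ContDiff ℝ 2 U → ContDiff ℝ 2 V → (∀ x, 1 ≤ U x) → (∀ x, 1 ≤ V x) → 0 < r →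
      (∀ x ∈ ball y (16 * r), -lap U x = lam * V x ^ p) →
      (∀ x ∈ ball y (16 * r), -lap V x = gam * U x ^ θ) →
      (∀ φ : EuclideanSpace ℝ (Fin N) → ℝ, ContDiff ℝ (⊤ : ℕ∞) φ → HasCompactSupport φ →
        tsupport φ ⊆ ball y (16 * r) →
        ∫ x, (Real.sqrt (lam * gam * p * θ) * (V x ^ ((p - 1) / 2) * U x ^ ((θ - 1) / 2)))
          * φ x ^ 2 ≤ ∫ x, ∑ i, pd i φ x ^ 2) →
      ∫ x in ball y r, U x ^ θ * V x ^ (s - 1)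
        ≤ C / r ^ 2 * ∫ x in ball y (16 * r), V x ^ s := by
  have hθ : 1 < θ := by linarith
  have hs1 : 1 < s := by linarith
  have hp1 : 0 < p + 1 := by linarith
  have hθ1 : 0 < θ + 1 := by linarith
  set S := Real.sqrt (lam * gam * p * θ) with hSdef
  obtain ⟨m, hmdef⟩ : ∃ m, m = s * (θ + 1) / (2 * (p + 1)) := ⟨_, rfl⟩
  obtain ⟨n, hndef⟩ : ∃ n, n = s / 2 := ⟨_, rfl⟩
  obtain ⟨δ, hδdef⟩ : ∃ δ, δ = (p + 1) / (2 * s) := ⟨_, rfl⟩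
  obtain ⟨σ, hσdef⟩ : ∃ σ, σ = (p + 1) / (θ + 1) := ⟨_, rfl⟩
  obtain ⟨hm1, hn1, hS0, h12⟩ := exponents_key hp hpθ hlam hgam hs hL hmdef hndef hSdef
  have h2m : 0 < 2 * m - 1 := by linarith
  have h2n : 0 < 2 * n - 1 := by linarith
  have hm0 : 0 < m := by linarith
  have hn0 : 0 < n := by linarith
  have hδ0 : 0 < δ := by rw [hδdef]; positivity
  have hδ1 : δ < 1 := by rw [hδdef, div_lt_one (by positivity)]; linarith
  have hσ0 : 0 < σ := by rw [hσdef]; positivity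
  have hσ1 : σ ≤ 1 := by rw [hσdef, div_le_one hθ1]; linarith
  have hσe : σ * (θ + 1) = p + 1 := by rw [hσdef]; field_simp
  have hσm : σ * (2 * m) = s := by rw [hσdef, hmdef]; field_simp
  have h2ns : 2 * n = s := by rw [hndef]; ring
  obtain ⟨ℓ, hℓ0, hℓe⟩ : ∃ ℓ : ℝ, 0 < ℓ ∧ ℓ ^ (θ + 1) * σ * gam = lam := by
    refine ⟨(lam / (σ * gam)) ^ (1 / (θ + 1)), by positivity, ?_⟩
    rw [← Real.rpow_mul (by positivity)]
    have : 1 / (θ + 1) * (θ + 1) = 1 := by field_simp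
    rw [this, Real.rpow_one]
    field_simp
  set c1 := m ^ 2 / (2 * m - 1) * (lam / S) with hc1
  set c2 := n ^ 2 / (2 * n - 1) * (gam / S) with hc2
  have hc1p : 0 < c1 := by positivity
  have hc2p : 0 < c2 := by positivity
  obtain ⟨b, κ, c0, hb, hκ, hc0, hkey⟩ := amgm_key hc1p hc2p h12 hδ0 hδ1
  obtain ⟨Kb, hKb, hsplit⟩ := split_pow hb (θ := θ) (by linarith)
  obtain ⟨c, hc, hharn⟩ := harnack hN hθ hlam hgam hℓ0 hσ0 hσ1 hσe hℓe
  obtain ⟨K, hK, hcut⟩ := cutoff (N := N)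
  set M := (2 * ℓ) ^ (2 * m) with hM
  have hMp : 0 < M := by positivity
  set D1 := M * ((m / (2 * (2 * m - 1)) + 1) * K) with hD1
  set D2 := 1 * ((n / (2 * (2 * n - 1)) + 1) * K) with hD2
  have hD1p : 0 < D1 := by positivity
  have hD2p : 0 < D2 := by positivity
  set E := D1 / S + κ * (c2 * Kb / c + D2 / S) with hE
  have hEp : 0 < E := by positivity
  refine ⟨b * (E / c0) + Kb / c, by positivity, ?_⟩
  intro U V y r hU hV hU1 hV1 hr eU eV hstab
  have hU0 : ∀ x, 0 < U x := fun x => by linarith [hU1 x]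
  have hV0 : ∀ x, 0 < V x := fun x => by linarith [hV1 x]
  obtain ⟨J, hJ, hJh⟩ := hharn U V y r hU hV hU0 hV0 hr eU eV
  obtain ⟨η, hη, hηc, hηs, hη0, hη1, hηb, hηl, hηl'⟩ := hcut y r hr
  obtain ⟨W, hW, hW0, hUW, hWm, hWl⟩ := smooth_max hU J
    (κ := min ℓ (min 1 J)) (by positivity)
  set B2 := closedBall y (2 * r) with hB2
  have hBs : B2 ⊆ ball y (16 * r) := closedBall_subset_ball (by linarith)
  set T := ∫ x in ball y (16 * r), V x ^ s with hT
  have hηcont := hη.continuous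
  -- pointwise facts about `W`
  have hWU : ∀ x, W x ≤ U x := by
    intro x
    refine (hWm x).trans ?_
    have k1 : min ℓ (min 1 J) ≤ 1 := (min_le_right _ _).trans (min_le_left _ _)
    have k2 : min ℓ (min 1 J) ≤ J := (min_le_right _ _).trans (min_le_right _ _)
    have := hU1 x
    rcases le_total 0 (U x - J) with h | h
    · rw [max_eq_left h]; linarith
    · rw [max_eq_right h]; linarith
  have hWV : ∀ x ∈ B2, W x ≤ 2 * ℓ * V x ^ σ := by
    intro x hx
    have hv1 : 1 ≤ V x ^ σ := Real.one_le_rpow (hV1 x) hσ0.le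
    have k1 : min ℓ (min 1 J) ≤ ℓ := min_le_left _ _
    have k3 : max (U x - J) 0 ≤ ℓ * V x ^ σ :=
      max_le (by linarith [(hJh x hx).1]) (by positivity)
    have := hWm x
    nlinarith
  have hWV2 : ∀ x ∈ B2, W x ^ (2 * m) ≤ M * V x ^ s := by
    intro x hx
    have h := Real.rpow_le_rpow (hW0 x).le (hWV x hx) (z := 2 * m) (by linarith)
    rwa [Real.mul_rpow (by positivity) (Real.rpow_nonneg (hV0 x).le _),
      ← Real.rpow_mul (hV0 x).le, hσm] at h
  have hVp : ∀ a : ℝ, Continuous fun x => V x ^ a :=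
    fun a => (rpow_comp_contDiff hV hV0 a).continuous
  have hUp : ∀ a : ℝ, Continuous fun x => U x ^ a :=
    fun a => (rpow_comp_contDiff hU hU0 a).continuous
  have hWp : ∀ a : ℝ, Continuous fun x => W x ^ a :=
    fun a => (rpow_comp_contDiff hW hW0 a).continuous
  have pV : ∀ (a : ℝ) x, 0 < V x ^ a := fun a x => Real.rpow_pos_of_pos (hV0 x) a
  have pU : ∀ (a : ℝ) x, 0 < U x ^ a := fun a x => Real.rpow_pos_of_pos (hU0 x) a
  have pW : ∀ (a : ℝ) x, 0 < W x ^ a := fun a x => Real.rpow_pos_of_pos (hW0 x) a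
  -- energy estimates
  have en1 := energy_bd (g := fun x => lam * V x ^ p) hW hW0 hη (continuous_const.mul (hVp p))
    hV hV0 hr hK hMp hηc hηs hηl hηl' hm1 (fun x hx => by
      have e := eU x (hBs hx)
      refine (hWl x ?_).trans e.le
      rw [e]; exact (mul_pos hlam (pV p x)).le) hWV2
  have en2 := energy_bd (g := fun x => gam * U x ^ θ) (s := s) (M := 1) hV hV0 hη
    (continuous_const.mul (hUp θ))
    hV hV0 hr hK one_pos hηc hηs hηl hηl' hn1 (fun x hx => (eV x (hBs hx)).le)
    (fun x _ => by rw [h2ns, one_mul])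
  -- stability
  have ha : Continuous fun x => S * (V x ^ ((p - 1) / 2) * U x ^ ((θ - 1) / 2)) :=
    continuous_const.mul ((hVp _).mul (hUp _))
  have hts : ∀ f : EuclideanSpace ℝ (Fin N) → ℝ, tsupport (fun x => f x * η x) ⊆ B2 :=
    fun f => (closure_mono (fun z hz => by
      simp only [Function.mem_support] at hz ⊢
      intro h; exact hz (by rw [h, mul_zero]))).trans hηs
  have st1 := stab_ext ha (show 2 * r < 16 * r by linarith) hstab
    (ψ := fun x => W x ^ m * η x)
    (((rpow_comp_contDiff hW hW0 m).mul hη).of_le (by norm_num)) (hts _)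
  have st2 := stab_ext ha (show 2 * r < 16 * r by linarith) hstab
    (ψ := fun x => V x ^ n * η x)
    (((rpow_comp_contDiff hV hV0 n).mul hη).of_le (by norm_num)) (hts _)
  -- the four integrands
  set fX : EuclideanSpace ℝ (Fin N) → ℝ :=
    fun x => V x ^ ((p - 1) / 2) * W x ^ ((θ - 1) / 2) * W x ^ (2 * m) with hfX
  set fY : EuclideanSpace ℝ (Fin N) → ℝ :=
    fun x => V x ^ ((p - 1) / 2) * W x ^ ((θ - 1) / 2) * V x ^ s with hfY
  set fA : EuclideanSpace ℝ (Fin N) → ℝ := fun x => W x ^ (2 * m - 1) * V x ^ p with hfA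
  set fB : EuclideanSpace ℝ (Fin N) → ℝ := fun x => W x ^ θ * V x ^ (s - 1) with hfB
  set fQ : EuclideanSpace ℝ (Fin N) → ℝ := fun x => U x ^ θ * V x ^ (s - 1) with hfQ
  set fV : EuclideanSpace ℝ (Fin N) → ℝ := fun x => V x ^ s with hfV
  have cX : Continuous fX := ((hVp _).mul (hWp _)).mul (hWp _)
  have cY : Continuous fY := ((hVp _).mul (hWp _)).mul (hVp _)
  have cA : Continuous fA := (hWp _).mul (hVp _)
  have cB : Continuous fB := (hWp _).mul (hVp _)
  have cQ : Continuous fQ := (hUp _).mul (hVp _)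
  have cV : Continuous fV := hVp _
  set iX := ∫ x, fX x * η x ^ 2 with hiX
  set iY := ∫ x, fY x * η x ^ 2 with hiY
  set iA := ∫ x, fA x * η x ^ 2 with hiA
  set iB := ∫ x, fB x * η x ^ 2 with hiB
  set iQ := ∫ x, fQ x * η x ^ 2 with hiQ
  set iV := ∫ x, fV x * η x ^ 2 with hiV
  have hlowW : ∀ x, W x ^ ((θ - 1) / 2) ≤ U x ^ ((θ - 1) / 2) := fun x =>
    Real.rpow_le_rpow (hW0 x).le (hWU x) (by linarith)
  have R1 : S * iX ≤ m ^ 2 / (2 * m - 1) * (lam * iA) + D1 / r ^ 2 * T := by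
    have e1 : S * iX ≤ ∫ x, S * (V x ^ ((p - 1) / 2) * U x ^ ((θ - 1) / 2))
        * (W x ^ m * η x) ^ 2 := by
      have : ∀ x, S * (V x ^ ((p - 1) / 2) * U x ^ ((θ - 1) / 2)) * (W x ^ m * η x) ^ 2
          = (S * (V x ^ ((p - 1) / 2) * U x ^ ((θ - 1) / 2)) * W x ^ (2 * m)) * η x ^ 2 := by
        intro x
        rw [mul_comm 2 m, Real.rpow_mul (hW0 x).le, Real.rpow_two]; ring
      simp_rw [this]
      rw [hiX, ← integral_const_mul]
      simp_rw [← mul_assoc]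
      refine int_mono_cc (h := fun x => S * fX x) (continuous_const.mul cX)
        (((continuous_const.mul (hVp _)).mul (hUp _)).mul (hWp _)) hηcont hηc fun x _ => ?_
      have := hlowW x
      have p1 := pV ((p - 1) / 2) x
      have p2 := pW (2 * m) x
      simp only [hfX]
      rw [← mul_assoc, ← mul_assoc]
      gcongr
    have e2 : ∫ x, W x ^ (2 * m - 1) * (lam * V x ^ p) * η x ^ 2 = lam * iA := by
      rw [hiA, ← integral_const_mul]
      congr 1; funext x; simp only [hfA]; ring
    rw [e2] at en1
    have e3 : M * ((m / (2 * (2 * m - 1)) + 1) * (K / r ^ 2)) = D1 / r ^ 2 := by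
      rw [hD1]; ring
    rw [e3] at en1
    exact e1.trans (st1.trans en1)
  have R2 : S * iY ≤ n ^ 2 / (2 * n - 1) * (gam * iQ) + D2 / r ^ 2 * T := by
    have e1 : S * iY ≤ ∫ x, S * (V x ^ ((p - 1) / 2) * U x ^ ((θ - 1) / 2))
        * (V x ^ n * η x) ^ 2 := by
      have : ∀ x, S * (V x ^ ((p - 1) / 2) * U x ^ ((θ - 1) / 2)) * (V x ^ n * η x) ^ 2
          = (S * (V x ^ ((p - 1) / 2) * U x ^ ((θ - 1) / 2)) * V x ^ s) * η x ^ 2 := by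
        intro x
        rw [← h2ns, mul_comm 2 n, Real.rpow_mul (hV0 x).le, Real.rpow_two]; ring
      simp_rw [this]
      rw [hiY, ← integral_const_mul]
      simp_rw [← mul_assoc]
      refine int_mono_cc (h := fun x => S * fY x) (continuous_const.mul cY)
        (((continuous_const.mul (hVp _)).mul (hUp _)).mul (hVp _)) hηcont hηc fun x _ => ?_
      have := hlowW x
      have p1 := pV ((p - 1) / 2) x
      have p2 := pV s x
      simp only [hfY]
      rw [← mul_assoc, ← mul_assoc]
      gcongr
    have e2 : ∫ x, V x ^ (2 * n - 1) * (gam * U x ^ θ) * η x ^ 2 = gam * iQ := by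
      rw [hiQ, ← integral_const_mul]
      congr 1; funext x; simp only [hfQ, h2ns]; ring
    rw [e2] at en2
    have e3 : 1 * ((n / (2 * (2 * n - 1)) + 1) * (K / r ^ 2)) = D2 / r ^ 2 := by
      rw [hD2]; ring
    rw [e3] at en2
    exact e1.trans (st2.trans en2)
  -- comparison of `fQ` and `fB`
  have R3 : iQ ≤ b * iB + Kb / (c * r ^ 2) * iV := by
    have e := int_lin_cc (η := η) b (Kb / (c * r ^ 2)) 0 0 cB cV cV cV hηcont hηc
    have e' : b * iB + Kb / (c * r ^ 2) * iV
        = ∫ x, (b * fB x + Kb / (c * r ^ 2) * fV x + 0 * fV x + 0 * fV x) * η x ^ 2 := by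
      rw [e]; ring
    rw [e', hiQ]
    refine int_mono_cc cQ (by fun_prop) hηcont hηc fun x hx => ?_
    have h1 := hsplit (U x) (W x) J (hU0 x).le (hW0 x).le hJ.le (hUW x)
    have h2 := (hJh x (hηs hx)).2
    have h3 : J ^ θ ≤ V x / (c * r ^ 2) := by
      rw [le_div_iff₀ (by positivity)]; linarith
    have h4 : V x ^ s = V x * V x ^ (s - 1) := by
      rw [Real.rpow_sub_one (hV0 x).ne']
      have := hV0 x
      field_simp
    have p1 := pV (s - 1) x
    simp only [hfQ, hfB, hfV, zero_mul, add_zero]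
    rw [h4]
    calc U x ^ θ * V x ^ (s - 1)
        ≤ (b * W x ^ θ + Kb * (V x / (c * r ^ 2))) * V x ^ (s - 1) := by
          refine mul_le_mul_of_nonneg_right (h1.trans ?_) p1.le
          gcongr
      _ = _ := by ring
  have R4 : iV ≤ T := by
    have := int_bd (h := fun x => fV x * η x ^ 2) (k := fV) (y := y) (r := 2 * r) (ρ := 16 * r)
      (D := 1) (cV.mul (hηcont.pow 2)) cV (fun x => (pV s x).le) (by linarith) zero_le_one
      (fun x hx => by
        have : η x = 0 := image_eq_zero_of_notMem_tsupport fun h => hx (hηs h)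
        rw [this]; simp)
      (fun x hx => by
        have : η x ^ 2 ≤ 1 := pow_le_one₀ (hη0 x) (hη1 x)
        have := pV s x
        simp only [hfV]
        nlinarith)
    rwa [one_mul] at this
  have R5 : c0 * iB ≤ iX + κ * iY - c1 * iA - κ * c2 * b * iB := by
    have e := int_lin_cc (η := η) 1 κ (-c1) (-(κ * c2 * b)) cX cY cA cB hηcont hηc
    have e' : iX + κ * iY - c1 * iA - κ * c2 * b * iB
        = ∫ x, (1 * fX x + κ * fY x + (-c1) * fA x + (-(κ * c2 * b)) * fB x) * η x ^ 2 := by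
      rw [e]; ring
    rw [e', hiB, ← integral_const_mul]
    simp_rw [← mul_assoc]
    refine int_mono_cc (h := fun x => c0 * fB x) (by fun_prop) (by fun_prop) hηcont hηc
      fun x _ => ?_
    have hk := hkey (fX x) (fY x)
      (mul_pos (mul_pos (pV _ x) (pW _ x)) (pW _ x)).le
      (mul_pos (mul_pos (pV _ x) (pW _ x)) (pV _ x)).le
    obtain ⟨i1, i2⟩ := interp (W := W x) (V := V x) hp (by linarith) hmdef hδdef (hW0 x) (hV0 x)
    have i1' : fX x ^ (1 - δ) * fY x ^ δ = fA x := i1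
    have i2' : fX x ^ δ * fY x ^ (1 - δ) = fB x := i2
    rw [i1', i2'] at hk
    linarith
  have R6 : ∫ x in ball y r, U x ^ θ * V x ^ (s - 1) ≤ iQ := by
    calc ∫ x in ball y r, U x ^ θ * V x ^ (s - 1) = ∫ x in ball y r, fQ x * η x ^ 2 := by
          refine setIntegral_congr_fun measurableSet_ball fun x hx => ?_
          simp only [hfQ]
          rw [hηb x hx]; ring
      _ ≤ iQ := setIntegral_le_integral (int_cc cQ hηcont hηc)
          (Filter.Eventually.of_forall fun x => by
            have := mul_pos (pU θ x) (pV (s - 1) x)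
            simp only [hfQ, Pi.zero_apply]
            positivity)
  -- combine
  have hr2 : 0 < r ^ 2 := by positivity
  have hT0 : 0 ≤ T := setIntegral_nonneg measurableSet_ball fun x _ => (pV s x).le
  obtain ⟨τ, hτ⟩ : ∃ τ, τ = T / r ^ 2 := ⟨_, rfl⟩
  have hτ0 : 0 ≤ τ := by rw [hτ]; positivity
  have R1' : iX ≤ c1 * iA + D1 / S * τ := by
    have : c1 * iA + D1 / S * τ = (m ^ 2 / (2 * m - 1) * (lam * iA) + D1 / r ^ 2 * T) / S := by
      rw [hc1, hτ]; field_simp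
    rw [this, le_div_iff₀ hS0]; linarith
  have R2' : iY ≤ c2 * iQ + D2 / S * τ := by
    have : c2 * iQ + D2 / S * τ = (n ^ 2 / (2 * n - 1) * (gam * iQ) + D2 / r ^ 2 * T) / S := by
      rw [hc2, hτ]; field_simp
    rw [this, le_div_iff₀ hS0]; linarith
  have R3' : iQ ≤ b * iB + Kb / c * τ := by
    refine R3.trans ?_
    have : Kb / (c * r ^ 2) * iV ≤ Kb / (c * r ^ 2) * T := by gcongr
    have e : Kb / (c * r ^ 2) * T = Kb / c * τ := by rw [hτ]; field_simp
    linarith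
  have R7 : c0 * iB ≤ E * τ := by
    have q1 : κ * iY ≤ κ * (c2 * (b * iB + Kb / c * τ) + D2 / S * τ) := by
      refine mul_le_mul_of_nonneg_left (R2'.trans ?_) hκ.le
      gcongr
    have : E * τ = D1 / S * τ + κ * (c2 * (Kb / c * τ) + D2 / S * τ) := by rw [hE]; ring
    rw [this]
    linarith
  have R8 : iB ≤ E / c0 * τ := by
    have : E / c0 * τ = E * τ / c0 := by ring
    rw [this, le_div_iff₀ hc0]; linarith
  refine R6.trans (R3'.trans ?_)
  have e : (b * (E / c0) + Kb / c) / r ^ 2 * T = b * (E / c0 * τ) + Kb / c * τ := by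
    rw [hτ]; ring
  rw [e]
  have : b * iB ≤ b * (E / c0 * τ) := by gcongr
  linarith

lemma lap_congr_add_one {N : ℕ} {U u : EuclideanSpace ℝ (Fin N) → ℝ} {A : Set (EuclideanSpace ℝ (Fin N))}
    (hA : IsOpen A) (h : ∀ x ∈ A, U x = u x + 1) {x : EuclideanSpace ℝ (Fin N)} (hx : x ∈ A) :
    lap U x = lap u x := by
  have h1 : ∀ z ∈ A, fderiv ℝ U z = fderiv ℝ u z := by
    intro z hz
    have : U =ᶠ[nhds z] fun x => u x + 1 := by
      filter_upwards [hA.mem_nhds hz] with w hw using h w hw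
    rw [this.fderiv_eq, fderiv_add_const]
  unfold lap
  refine Finset.sum_congr rfl fun i _ => ?_
  have : (fun y => fderiv ℝ U y (EuclideanSpace.single i 1)) =ᶠ[nhds x]
      fun y => fderiv ℝ u y (EuclideanSpace.single i 1) := by
    filter_upwards [hA.mem_nhds hx] with w hw
    rw [h1 w hw]
  rw [this.fderiv_eq]

lemma globalize {N : ℕ} {Ω : Set (EuclideanSpace ℝ (Fin N))} (hΩ : IsOpen Ω)
    {y : EuclideanSpace ℝ (Fin N)} {R : ℝ} (hR : 0 < R) (hsub : closedBall y R ⊆ Ω) :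
    ∃ A : Set (EuclideanSpace ℝ (Fin N)), IsOpen A ∧ closedBall y R ⊆ A ∧
      ∀ u : EuclideanSpace ℝ (Fin N) → ℝ, ContDiffOn ℝ 2 u Ω → (∀ x ∈ Ω, 0 < u x) →
      ∃ U : EuclideanSpace ℝ (Fin N) → ℝ, ContDiff ℝ 2 U ∧ (∀ x, 1 ≤ U x) ∧
        ∀ x ∈ A, U x = u x + 1 := by
  obtain ⟨δ, hδ, hth⟩ := (isCompact_closedBall y R).exists_thickening_subset_open hΩ hsub
  rw [thickening_closedBall hδ hR.le] at hth
  set χ : ContDiffBump y := ⟨R + δ / 3, R + 2 * δ / 3, by positivity, by linarith⟩ with hχ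
  have hts : tsupport χ ⊆ Ω := by
    rw [χ.tsupport_eq]
    refine Subset.trans ?_ hth
    apply closedBall_subset_ball
    change R + 2 * δ / 3 < δ + R
    linarith
  refine ⟨ball y (R + δ / 3), isOpen_ball, closedBall_subset_ball (by linarith),
    fun u hu hu0 => ⟨fun x => χ x * u x + 1, ?_, fun x => ?_, fun x hx => ?_⟩⟩
  · refine contDiff_iff_contDiffAt.2 fun x => ?_
    refine ContDiffAt.add ?_ contDiffAt_const
    by_cases hx : x ∈ Ω
    · exact χ.contDiffAt.mul (hu.contDiffAt (hΩ.mem_nhds hx))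
    · have h1 : x ∉ tsupport χ := fun h => hx (hts h)
      have h2 := notMem_tsupport_iff_eventuallyEq.1 h1
      have h3 : (fun x => χ x * u x) =ᶠ[nhds x] fun _ => 0 := by
        filter_upwards [h2] with z hz
        rw [hz]; simp
      exact contDiffAt_const.congr_of_eventuallyEq h3
  · by_cases hx : x ∈ Ω
    · have := mul_nonneg (χ.nonneg (x := x)) (hu0 x hx).le
      linarith
    · have h1 : χ x = 0 := image_eq_zero_of_notMem_tsupport fun h => hx (hts h)
      simp [h1]
  · have : χ x = 1 := χ.one_of_mem_closedBall (ball_subset_closedBall hx)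
    simp [this]

lemma cover_int {N : ℕ} {f : EuclideanSpace ℝ (Fin N) → ℝ} (hf : Continuous f) (hf0 : ∀ x, 0 ≤ f x)
    {A : Set (EuclideanSpace ℝ (Fin N))} (hA : MeasurableSet A) {ι : Type*} (t : Finset ι)
    (z : ι → EuclideanSpace ℝ (Fin N)) (r : ℝ) (hcov : ∀ x ∈ A, ∃ i ∈ t, x ∈ ball (z i) r) :
    ∫ x in A, f x ≤ ∑ i ∈ t, ∫ x in ball (z i) r, f x := by
  have hi : ∀ i, IntegrableOn f (ball (z i) r) := fun i =>
    (hf.continuousOn.integrableOn_compact (isCompact_closedBall (z i) r)).mono_set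
      ball_subset_closedBall
  have hi' : ∀ i ∈ t, Integrable ((ball (z i) r).indicator f) := fun i _ =>
    (hi i).integrable_indicator measurableSet_ball
  rw [← integral_indicator hA]
  simp_rw [← integral_indicator measurableSet_ball]
  rw [← integral_finsetSum _ hi']
  refine integral_mono_of_nonneg (Filter.Eventually.of_forall fun x =>
    indicator_nonneg (fun x _ => hf0 x) x) (integrable_finsetSum _ hi')
    (Filter.Eventually.of_forall fun x => ?_)
  by_cases hx : x ∈ A
  · obtain ⟨i, hit, hxi⟩ := hcov x hx
    have h1 := Finset.single_le_sum (f := fun i => (ball (z i) r).indicator f x)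
      (fun j _ => indicator_nonneg (fun x _ => hf0 x) x) hit
    simp only [indicator_of_mem hxi] at h1
    simp only [indicator_of_mem hx]
    exact h1
  · simp only [indicator_of_notMem hx]
    exact Finset.sum_nonneg fun j _ => indicator_nonneg (fun x _ => hf0 x) x

lemma stab_transfer {N : ℕ} {Ω A : Set (EuclideanSpace ℝ (Fin N))} (hΩ : IsOpen Ω)
    {p θ lam gam : ℝ} {u v U V : EuclideanSpace ℝ (Fin N) → ℝ}
    (hst : IsStable Ω lam gam p θ u v) (hU : ∀ x ∈ A, U x = u x + 1) (hV : ∀ x ∈ A, V x = v x + 1)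
    {φ : EuclideanSpace ℝ (Fin N) → ℝ} (hφ : ContDiff ℝ (⊤ : ℕ∞) φ) (hc : HasCompactSupport φ)
    (hA : tsupport φ ⊆ A) (hs : tsupport φ ⊆ Ω) :
    ∫ x, (Real.sqrt (lam * gam * p * θ) * (V x ^ ((p - 1) / 2) * U x ^ ((θ - 1) / 2)))
          * φ x ^ 2 ≤ ∫ x, ∑ i, pd i φ x ^ 2 := by
  have h := hst φ ⟨hφ, hc, hs⟩
  simp_rw [norm_gradient_sq] at h
  rw [setIntegral_eq_integral_of_forall_compl_eq_zero (s := Ω) (f := fun x => ∑ i, pd i φ x ^ 2)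
    (fun x hx => Finset.sum_eq_zero fun i _ => by
      rw [pd_zero_of_notMem i fun h => hx (hs h)]; norm_num)] at h
  refine le_trans (le_of_eq ?_) h
  rw [← integral_const_mul, ← setIntegral_eq_integral_of_forall_compl_eq_zero (s := Ω)]
  · refine setIntegral_congr_fun hΩ.measurableSet fun x _ => ?_
    by_cases hx : x ∈ tsupport φ
    · simp only [hU x (hA hx), hV x (hA hx)]; ring
    · simp [image_eq_zero_of_notMem_tsupport hx]
  · intro x hx
    have : φ x = 0 := image_eq_zero_of_notMem_tsupport fun h => hx (hs h)
    simp [this]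

/-- local integral estimate for stable solutions on balls. -/
theorem stmt16 {N : ℕ} (hN : 1 ≤ N) (Ω : Set (EuclideanSpace ℝ (Fin N))) (hΩ : IsOpen Ω)
    (p θ lam gam s : ℝ) (hp : 1 < p) (hpθ : p ≤ θ) (hlam : 0 < lam) (hgam : 0 < gam)
    (hs : (p + 1) / 2 < s) (hL : Lpoly p θ s < 0) :
    ∃ C : ℝ, ∀ u v : EuclideanSpace ℝ (Fin N) → ℝ,
      IsSolution Ω lam gam p θ u v → IsStable Ω lam gam p θ u v →
      ∀ (y : EuclideanSpace ℝ (Fin N)) (R : ℝ), 0 < R → closedBall y R ⊆ Ω →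
        ∫ x in ball y (R / 2), (u x + 1) ^ θ * (v x + 1) ^ (s - 1)
          ≤ C / R ^ 2 * ∫ x in ball y R, (v x + 1) ^ s := by
  obtain ⟨C, hC, hest⟩ := local_est hN hp hpθ hlam hgam hs hL
  obtain ⟨t, hts, htf, hcov⟩ :=
    (isCompact_closedBall (0 : EuclideanSpace ℝ (Fin N)) (1 / 2)).finite_cover_balls
      (e := 1 / 40) (by norm_num)
  refine ⟨htf.toFinset.card * (1600 * C), fun u v hsol hst y R hR hsub => ?_⟩
  obtain ⟨hu, hv, hu0, hv0, eu, ev⟩ := hsol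
  obtain ⟨A, hAo, hAs, hglob⟩ := globalize hΩ hR hsub
  obtain ⟨U, hU, hU1, hUu⟩ := hglob u hu hu0
  obtain ⟨V, hV, hV1, hVv⟩ := hglob v hv hv0
  have hU0 : ∀ x, 0 < U x := fun x => by linarith [hU1 x]
  have hV0 : ∀ x, 0 < V x := fun x => by linarith [hV1 x]
  have hbA : ball y R ⊆ A := ball_subset_closedBall.trans hAs
  have hbΩ : ball y R ⊆ Ω := ball_subset_closedBall.trans hsub
  have hh : ball y (R / 2) ⊆ ball y R := ball_subset_ball (by linarith)
  have e1 : ∫ x in ball y (R / 2), (u x + 1) ^ θ * (v x + 1) ^ (s - 1)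
      = ∫ x in ball y (R / 2), U x ^ θ * V x ^ (s - 1) :=
    setIntegral_congr_fun measurableSet_ball fun x hx => by
      simp only [hUu x (hbA (hh hx)), hVv x (hbA (hh hx))]
  have e2 : ∫ x in ball y R, (v x + 1) ^ s = ∫ x in ball y R, V x ^ s :=
    setIntegral_congr_fun measurableSet_ball fun x hx => by
      simp only [hVv x (hbA hx)]
  rw [e1, e2]
  have hVs : Continuous fun x => V x ^ s := (rpow_comp_contDiff hV hV0 s).continuous
  have hQ : Continuous fun x => U x ^ θ * V x ^ (s - 1) :=
    (rpow_comp_contDiff hU hU0 θ).continuous.mul (rpow_comp_contDiff hV hV0 (s - 1)).continuous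
  set T := ∫ x in ball y R, V x ^ s with hT
  have hr : 0 < R / 40 := by positivity
  have hloc : ∀ z ∈ htf.toFinset, ∫ x in ball (y + R • z) (R / 40), U x ^ θ * V x ^ (s - 1)
      ≤ C / (R / 40) ^ 2 * T := by
    intro z hz
    have hz' : ‖z‖ ≤ 1 / 2 := mem_closedBall_zero_iff.1 (hts (htf.mem_toFinset.1 hz))
    have hin : ball (y + R • z) (16 * (R / 40)) ⊆ ball y R := by
      apply ball_subset_ball'
      rw [dist_eq_norm, add_sub_cancel_left, norm_smul, Real.norm_eq_abs, abs_of_pos hR]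
      nlinarith
    refine (hest U V (y + R • z) (R / 40) hU hV hU1 hV1 hr ?_ ?_ ?_).trans ?_
    · intro x hx
      have hx' := hin hx
      rw [lap_congr_add_one hAo hUu (hbA hx'), eu x (hbΩ hx'), hVv x (hbA hx')]
    · intro x hx
      have hx' := hin hx
      rw [lap_congr_add_one hAo hVv (hbA hx'), ev x (hbΩ hx'), hUu x (hbA hx')]
    · intro φ hφ hφc hφs
      exact stab_transfer hΩ hst hUu hVv hφ hφc (hφs.trans (hin.trans hbA))
        (hφs.trans (hin.trans hbΩ))
    · refine mul_le_mul_of_nonneg_left ?_ (by positivity)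
      refine setIntegral_mono_set ((hVs.continuousOn.integrableOn_compact
        (isCompact_closedBall y R)).mono_set ball_subset_closedBall)
        (Filter.Eventually.of_forall fun x => (Real.rpow_pos_of_pos (hV0 x) s).le)
        (Filter.Eventually.of_forall hin)
  have hcv := cover_int hQ (fun x => (mul_pos (Real.rpow_pos_of_pos (hU0 x) θ)
    (Real.rpow_pos_of_pos (hV0 x) (s - 1))).le) (measurableSet_ball (x := y) (ε := R / 2))
    htf.toFinset (fun z => y + R • z) (R / 40) (fun x hx => by
      have h1 : R⁻¹ • (x - y) ∈ closedBall (0 : EuclideanSpace ℝ (Fin N)) (1 / 2) := by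
        rw [mem_closedBall_zero_iff, norm_smul, Real.norm_eq_abs, abs_of_pos (inv_pos.2 hR),
          ← div_eq_inv_mul, div_le_iff₀ hR, ← dist_eq_norm]
        have := mem_ball.1 hx
        linarith
      obtain ⟨z, hz, hxz⟩ := mem_iUnion₂.1 (hcov h1)
      refine ⟨z, htf.mem_toFinset.2 hz, ?_⟩
      rw [mem_ball, dist_eq_norm] at hxz ⊢
      have h2 : x - (y + R • z) = R • (R⁻¹ • (x - y) - z) := by
        rw [smul_sub, smul_smul, mul_inv_cancel₀ hR.ne', one_smul]; abel
      rw [h2, norm_smul, Real.norm_eq_abs, abs_of_pos hR]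
      nlinarith)
  refine hcv.trans ((Finset.sum_le_sum hloc).trans (le_of_eq ?_))
  rw [Finset.sum_const, nsmul_eq_mul]
  field_simp
  norm_num
  ring
end
end

section
/- Let N ≥ 3 and 1 ≤ t < N/(N−2). There exists a constant C > 0, depending only on N and t, such that for every R > 0 and every function w that is C² on a neighborhood of the closed ball B_{2R} centered at the origin, (∫_{B_R} |w|^t dx)^{1/t} ≤ C R^{N(1/t − 1) + 2} ∫_{B_{2R}} |Δw| dx + C R^{N(1/t − 1)} ∫_{B_{2R}} |w| dx. -/
open MeasureTheory Metric Real Set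

noncomputable section

/-- radial averaging kernel -/
def kphi {N : ℕ} (z : EuclideanSpace ℝ (Fin N)) : ℝ := 4 * max 0 (1 - ‖z‖ ^ 2)

/-- radial potential with `∇ kpsi = - kphi z • z` -/
def kpsi {N : ℕ} (z : EuclideanSpace ℝ (Fin N)) : ℝ := (max 0 (1 - ‖z‖ ^ 2)) ^ 2

lemma hasDerivAt_maxsq (u : ℝ) :
    HasDerivAt (fun v : ℝ => (max 0 v) ^ 2) (2 * max 0 u) u := by
  rcases lt_trichotomy u 0 with h | h | h
  · rw [max_eq_left h.le, mul_zero]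
    refine (hasDerivAt_const u (0 : ℝ)).congr_of_eventuallyEq ?_
    filter_upwards [Iio_mem_nhds h] with v hv
    simp [max_eq_left (show v ≤ 0 from le_of_lt hv)]
  · subst h
    simp only [max_self, mul_zero]
    rw [hasDerivAt_iff_isLittleO_nhds_zero]
    simp only [zero_add, max_self, smul_zero, sub_zero, ne_eq, OfNat.ofNat_ne_zero,
      not_false_eq_true, zero_pow]
    have h1 : (fun h : ℝ => (max 0 h) ^ 2) =O[nhds 0] fun h : ℝ => h ^ 2 := by
      refine Asymptotics.IsBigO.of_bound 1 (Filter.Eventually.of_forall fun h => ?_)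
      rw [one_mul, norm_pow, norm_pow]
      gcongr
      simp only [Real.norm_eq_abs]
      rcases le_total 0 h with h' | h'
      · simp [h']
      · simp [h']
    refine h1.trans_isLittleO ?_
    exact Asymptotics.isLittleO_pow_id (by norm_num)
  · rw [max_eq_right h.le]
    have := hasDerivAt_pow 2 u
    simp only [Nat.cast_ofNat, Nat.add_one_sub_one, pow_one] at this
    refine this.congr_of_eventuallyEq ?_
    filter_upwards [Ioi_mem_nhds h] with v hv
    simp [max_eq_right (show 0 ≤ v from le_of_lt hv)]

section kernels
variable {N : ℕ}

lemma kphi_continuous : Continuous (kphi (N := N)) := by unfold kphi; fun_prop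

lemma kpsi_continuous : Continuous (kpsi (N := N)) := by unfold kpsi; fun_prop

lemma kphi_nonneg (z : EuclideanSpace ℝ (Fin N)) : 0 ≤ kphi z := by unfold kphi; positivity

lemma kpsi_nonneg (z : EuclideanSpace ℝ (Fin N)) : 0 ≤ kpsi z := by unfold kpsi; positivity

lemma kphi_zero {z : EuclideanSpace ℝ (Fin N)} (h : 1 ≤ ‖z‖) : kphi z = 0 := by
  unfold kphi
  rw [max_eq_left (by nlinarith), mul_zero]

lemma kpsi_zero {z : EuclideanSpace ℝ (Fin N)} (h : 1 ≤ ‖z‖) : kpsi z = 0 := by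
  unfold kpsi
  rw [max_eq_left (by nlinarith)]; simp

lemma kphi_le (z : EuclideanSpace ℝ (Fin N)) : kphi z ≤ 4 := by
  unfold kphi
  have : max 0 (1 - ‖z‖ ^ 2) ≤ 1 := max_le (by norm_num) (by nlinarith [sq_nonneg ‖z‖])
  linarith

lemma kpsi_le (z : EuclideanSpace ℝ (Fin N)) : kpsi z ≤ 1 := by
  unfold kpsi
  have : max 0 (1 - ‖z‖ ^ 2) ≤ 1 := max_le (by norm_num) (by nlinarith [sq_nonneg ‖z‖])
  exact pow_le_one₀ (le_max_left _ _) this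

lemma kphi_supp : HasCompactSupport (kphi (N := N)) := by
  refine HasCompactSupport.intro (isCompact_closedBall 0 1) fun z hz => kphi_zero ?_
  simp at hz; exact hz.le

lemma kpsi_supp : HasCompactSupport (kpsi (N := N)) := by
  refine HasCompactSupport.intro (isCompact_closedBall 0 1) fun z hz => kpsi_zero ?_
  simp at hz; exact hz.le

lemma kphi_integral_pos : 0 < ∫ z : EuclideanSpace ℝ (Fin N), kphi z := by
  refine kphi_continuous.integral_pos_of_hasCompactSupport_nonneg_nonzero kphi_supp
    kphi_nonneg (x := 0) ?_
  simp [kphi]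

lemma kpsi_hasFDerivAt (z : EuclideanSpace ℝ (Fin N)) :
    HasFDerivAt kpsi (-(kphi z • innerSL ℝ z)) z := by
  have h1 : HasFDerivAt (fun z : EuclideanSpace ℝ (Fin N) => 1 - ‖z‖ ^ 2)
      (-(2 • innerSL ℝ z)) z := by
    exact (hasStrictFDerivAt_norm_sq z).hasFDerivAt.const_sub 1
  have h2 := (hasDerivAt_maxsq (1 - ‖z‖ ^ 2)).comp_hasFDerivAt z h1
  convert! h2 using 1
  ext v
  simp [kphi]
  ring

lemma kpsi_fderiv (z : EuclideanSpace ℝ (Fin N)) (i : Fin N) :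
    fderiv ℝ kpsi z (EuclideanSpace.single i 1) = - (kphi z * z i) := by
  rw [(kpsi_hasFDerivAt z).fderiv]
  simp [EuclideanSpace.inner_single_right]

variable {w : EuclideanSpace ℝ (Fin N) → ℝ}

lemma D_contDiff (hw : ContDiff ℝ 2 w) (v : EuclideanSpace ℝ (Fin N)) :
    ContDiff ℝ 1 (fun y => fderiv ℝ w y v) :=
  (hw.fderiv_right (m := 1) (by norm_num)).clm_apply contDiff_const

lemma lap_continuous_s17 (hw : ContDiff ℝ 2 w) : Continuous (lap w) := by
  unfold lap
  refine continuous_finsetSum _ fun i _ => ?_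
  exact ((D_contDiff hw _).continuous_fderiv (by norm_num)).clm_apply continuous_const

lemma ibp_i (hw : ContDiff ℝ 2 w) (x : EuclideanSpace ℝ (Fin N)) (s : ℝ) (i : Fin N) :
    ∫ z, kphi z * z i * fderiv ℝ w (x - s • z) (EuclideanSpace.single i 1) =
      - (s * ∫ z, kpsi z * fderiv ℝ (fun y => fderiv ℝ w y (EuclideanSpace.single i 1))
        (x - s • z) (EuclideanSpace.single i 1)) := by
  set e : EuclideanSpace ℝ (Fin N) := EuclideanSpace.single i 1
  set D := fun y => fderiv ℝ w y e with hD
  have hDc : ContDiff ℝ 1 D := D_contDiff hw e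
  have hDd : Continuous fun y => fderiv ℝ D y e :=
    (hDc.continuous_fderiv (by norm_num)).clm_apply continuous_const
  have hder : ∀ z, HasFDerivAt (fun z => D (x - s • z))
      ((fderiv ℝ D (x - s • z)).comp (-(s • ContinuousLinearMap.id ℝ _))) z := by
    intro z
    have h1 : HasFDerivAt (fun z : EuclideanSpace ℝ (Fin N) => x - s • z)
      (-(s • ContinuousLinearMap.id ℝ _)) z := ((hasFDerivAt_id z).const_smul s).const_sub x
    exact ((hDc.differentiable (by norm_num)) _).hasFDerivAt.comp z h1
  have hder' : ∀ z, fderiv ℝ (fun z => D (x - s • z)) z e = - (s * fderiv ℝ D (x - s • z) e) := by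
    intro z
    rw [(hder z).fderiv]; simp
  have key := integral_mul_fderiv_eq_neg_fderiv_mul_of_integrable (μ := volume)
    (f := fun z => D (x - s • z)) (g := kpsi (N := N)) (v := e) ?_ ?_ ?_ ?_ ?_
  · simp only [hder', e, kpsi_fderiv] at key
    rw [← integral_const_mul, ← neg_inj, ← integral_neg]
    rw [← integral_neg, ] at key
    rw [neg_neg]
    convert! key using 2
    · funext z; simp [hD, e]; ring
    · funext z; simp [hD, e]; ring
  · simp only [hder']
    refine Continuous.integrable_of_hasCompactSupport ?_ kpsi_supp.mul_left
    have : Continuous fun z => fderiv ℝ D (x - s • z) e := hDd.comp (by fun_prop)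
    exact ((this.const_mul s).neg).mul kpsi_continuous
  · simp only [e, kpsi_fderiv]
    have h0 : Continuous fun z => D (x - s • z) := hDc.continuous.comp (by fun_prop)
    have h1 : HasCompactSupport fun z : EuclideanSpace ℝ (Fin N) => -(kphi z * z i) :=
      (kphi_supp.mul_right).neg
    refine Continuous.integrable_of_hasCompactSupport ?_ h1.mul_left
    have := kphi_continuous (N := N)
    fun_prop
  · have h0 : Continuous fun z => D (x - s • z) := hDc.continuous.comp (by fun_prop)
    refine Continuous.integrable_of_hasCompactSupport ?_ kpsi_supp.mul_left
    exact h0.mul kpsi_continuous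
  · intro z _; exact (hder z).differentiableAt
  · intro z _; exact (kpsi_hasFDerivAt z).differentiableAt

lemma avg_hasDerivAt (hw : ContDiff ℝ 2 w) (hc : HasCompactSupport w)
    (x : EuclideanSpace ℝ (Fin N)) (s : ℝ) :
    HasDerivAt (fun s : ℝ => ∫ z, kphi z * w (x - s • z))
      (s * ∫ z, kpsi z * lap w (x - s • z)) s := by
  have hfd : Continuous (fderiv ℝ w) := hw.continuous_fderiv (by norm_num)
  obtain ⟨M, hM⟩ := hfd.bounded_above_of_compact_support (hc.fderiv (𝕜 := ℝ))
  have hM0 : 0 ≤ M := (norm_nonneg _).trans (hM 0)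
  have hφ := kphi_continuous (N := N)
  have hwc := hw.continuous
  have h := hasDerivAt_integral_of_dominated_loc_of_deriv_le (μ := volume) (𝕜 := ℝ)
    (F := fun (s : ℝ) (z : EuclideanSpace ℝ (Fin N)) => kphi z * w (x - s • z))
    (F' := fun s z => kphi z * fderiv ℝ w (x - s • z) (-z)) (x₀ := s) (s := univ)
    (bound := fun z => kphi z * (M * ‖z‖)) Filter.univ_mem ?_ ?_ ?_ ?_ ?_ ?_
  · convert! h.2 using 1
    have e1 : ∀ z : EuclideanSpace ℝ (Fin N), kphi z * fderiv ℝ w (x - s • z) (-z) =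
        - ∑ i, kphi z * z i * fderiv ℝ w (x - s • z) (EuclideanSpace.single i 1) := by
      intro z
      have hz : z = ∑ i, z i • EuclideanSpace.single i (1 : ℝ) := by
        ext j; simp [Finset.sum_apply, Pi.single_apply]
      conv_lhs => rw [map_neg]; enter [2, 1, 2]; rw [hz]
      rw [map_sum, mul_neg, Finset.mul_sum]
      congr 1
      refine Finset.sum_congr rfl fun i _ => ?_
      rw [map_smul, smul_eq_mul]; ring
    simp only [e1]
    rw [integral_neg, integral_finsetSum]
    · simp only [ibp_i hw]
      rw [Finset.sum_neg_distrib, neg_neg, ← Finset.mul_sum]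
      congr 1
      rw [← integral_finsetSum]
      · simp only [lap, Finset.mul_sum]
      · intro i _
        refine Continuous.integrable_of_hasCompactSupport ?_ kpsi_supp.mul_right
        refine kpsi_continuous.mul ?_
        have : Continuous fun y => fderiv ℝ (fun y => fderiv ℝ w y (EuclideanSpace.single i 1)) y
            (EuclideanSpace.single i 1) :=
          ((D_contDiff hw _).continuous_fderiv (by norm_num)).clm_apply continuous_const
        exact this.comp (by fun_prop)
    · intro i _
      refine Continuous.integrable_of_hasCompactSupport ?_ kphi_supp.mul_right.mul_right
      fun_prop
  · refine Filter.Eventually.of_forall fun s => ?_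
    exact Continuous.aestronglyMeasurable (by fun_prop)
  · exact Continuous.integrable_of_hasCompactSupport (by fun_prop) kphi_supp.mul_right
  · exact Continuous.aestronglyMeasurable (by fun_prop)
  · refine Filter.Eventually.of_forall fun z s _ => ?_
    rw [norm_mul, Real.norm_of_nonneg (kphi_nonneg z)]
    refine mul_le_mul_of_nonneg_left ?_ (kphi_nonneg z)
    refine ((fderiv ℝ w (x - s • z)).le_opNorm _).trans ?_
    rw [norm_neg]
    gcongr
    exact hM _
  · exact Continuous.integrable_of_hasCompactSupport (by fun_prop) kphi_supp.mul_right
  · refine Filter.Eventually.of_forall fun z s _ => ?_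
    refine HasDerivAt.const_mul _ ?_
    have h1 : HasDerivAt (fun s : ℝ => x - s • z) (-z) s := by
      simpa using ((hasDerivAt_id s).smul_const z).const_sub x
    exact ((hw.differentiable (by norm_num)) _).hasFDerivAt.comp_hasDerivAt s h1

lemma lap_supp (hc : HasCompactSupport w) : HasCompactSupport (lap w) := by
  refine HasCompactSupport.intro hc fun x hx => ?_
  have : w =ᶠ[nhds x] 0 := notMem_tsupport_iff_eventuallyEq.mp hx
  unfold lap
  refine Finset.sum_eq_zero fun i _ => ?_
  have h2 : (fun y => fderiv ℝ w y (EuclideanSpace.single i 1)) =ᶠ[nhds x] fun _ => 0 := by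
    filter_upwards [this.fderiv (𝕜 := ℝ)] with y hy
    rw [hy]; simp
  rw [h2.fderiv_eq]; simp

lemma repr_formula (hw : ContDiff ℝ 2 w) (hc : HasCompactSupport w)
    (x : EuclideanSpace ℝ (Fin N)) (R : ℝ) :
    (∫ z : EuclideanSpace ℝ (Fin N), kphi z) * w x = (∫ z, kphi z * w (x - R • z)) -
      ∫ s in (0 : ℝ)..R, s * ∫ z, kpsi z * lap w (x - s • z) := by
  have hl := lap_continuous_s17 hw
  obtain ⟨M, hM⟩ := hl.bounded_above_of_compact_support (lap_supp hc)
  have hψ := kpsi_continuous (N := N)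
  have hcont : Continuous fun s : ℝ => s * ∫ z, kpsi z * lap w (x - s • z) := by
    refine continuous_id.mul ?_
    refine continuous_of_dominated (bound := fun z => kpsi z * M) ?_ ?_ ?_ ?_
    · intro s; exact Continuous.aestronglyMeasurable (by fun_prop)
    · intro s; refine Filter.Eventually.of_forall fun z => ?_
      rw [norm_mul, Real.norm_of_nonneg (kpsi_nonneg z)]
      exact mul_le_mul_of_nonneg_left (hM _) (kpsi_nonneg z)
    · exact Continuous.integrable_of_hasCompactSupport (by fun_prop) kpsi_supp.mul_right
    · refine Filter.Eventually.of_forall fun z => ?_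
      fun_prop
  rw [intervalIntegral.integral_eq_sub_of_hasDerivAt (fun s _ => avg_hasDerivAt hw hc x s)
    (hcont.intervalIntegrable _ _)]
  simp [integral_mul_const]

end kernels
section estimates
open scoped ENNReal
variable {N : ℕ}

lemma lintegral_scale {s : ℝ} (hs : 0 < s) {g : EuclideanSpace ℝ (Fin N) → ℝ≥0∞}
    (hg : Measurable g) :
    ∫⁻ z, g (s • z) = ENNReal.ofReal (s ^ N)⁻¹ * ∫⁻ u, g u := by
  have h1 := lintegral_map (μ := (volume : Measure (EuclideanSpace ℝ (Fin N)))) hg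
    (measurable_const_smul s)
  rw [← h1]
  have h2 := Measure.map_addHaar_smul (volume : Measure (EuclideanSpace ℝ (Fin N))) hs.ne'
  simp only [finrank_euclideanSpace, Fintype.card_fin] at h2
  have h3 : Measure.map (fun x : EuclideanSpace ℝ (Fin N) => s • x) volume =
    ENNReal.ofReal |(s ^ N)⁻¹| • volume := h2
  rw [h3, lintegral_smul_measure, abs_of_pos (by positivity), smul_eq_mul]

lemma conv_bound {t : ℝ} (ht : 1 ≤ t) {k f : EuclideanSpace ℝ (Fin N) → ℝ≥0∞}
    (hk : Measurable k) (hf : Measurable f) :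
    (∫⁻ x, (∫⁻ u, k u * f (x - u)) ^ t) ^ (1 / t) ≤ (∫⁻ u, k u ^ t) ^ (1 / t) * ∫⁻ y, f y := by
  have t0 : 0 < t := by linarith
  have hti : 1 / t ≤ 1 := by rw [div_le_one t0]; exact ht
  have hti0 : 0 ≤ 1 / t := by positivity
  set I := ∫⁻ y, f y with hI
  have hx : ∀ x, (∫⁻ u, k u * f (x - u)) ^ t ≤ (∫⁻ u, k u ^ t * f (x - u)) * I ^ (t - 1) := by
    intro x
    have hfx : Measurable fun u => f (x - u) := hf.comp (measurable_const.sub measurable_id)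
    have h := ENNReal.lintegral_mul_norm_pow_le (μ := volume) (f := fun u => k u ^ t * f (x - u))
      (g := fun u => f (x - u)) (((hk.pow_const t).mul hfx).aemeasurable) hfx.aemeasurable
      (p := 1 / t) (q := 1 - 1 / t) hti0 (by linarith) (by ring)
    have e1 : ∀ u, (k u ^ t * f (x - u)) ^ (1 / t) * f (x - u) ^ (1 - 1 / t) = k u * f (x - u) := by
      intro u
      rw [ENNReal.mul_rpow_of_nonneg _ _ hti0, mul_assoc,
        ← ENNReal.rpow_add_of_nonneg _ _ hti0 (by linarith), ← ENNReal.rpow_mul,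
        mul_one_div_cancel t0.ne']
      simp
    have e2 : ∫⁻ u, f (x - u) = I := lintegral_sub_left_eq_self f x
    simp only [e1, e2] at h
    calc _ ≤ ((∫⁻ u, k u ^ t * f (x - u)) ^ (1 / t) * I ^ (1 - 1 / t)) ^ t := by
          gcongr
      _ = _ := by
        rw [ENNReal.mul_rpow_of_nonneg _ _ t0.le, ← ENNReal.rpow_mul, ← ENNReal.rpow_mul,
          one_div_mul_cancel t0.ne', ENNReal.rpow_one]
        congr 2
        field_simp
  have hmeas : Measurable (Function.uncurry fun (x u : EuclideanSpace ℝ (Fin N)) =>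
      k u ^ t * f (x - u)) :=
    ((hk.comp measurable_snd).pow_const t).mul (hf.comp (measurable_fst.sub measurable_snd))
  have main : (∫⁻ x, (∫⁻ u, k u * f (x - u)) ^ t) ≤ (∫⁻ u, k u ^ t) * I ^ t := by
    calc _ ≤ ∫⁻ x, (∫⁻ u, k u ^ t * f (x - u)) * I ^ (t - 1) := lintegral_mono hx
      _ = (∫⁻ x, ∫⁻ u, k u ^ t * f (x - u)) * I ^ (t - 1) :=
        lintegral_mul_const _ hmeas.lintegral_prod_right
      _ = (∫⁻ u, ∫⁻ x, k u ^ t * f (x - u)) * I ^ (t - 1) := by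
        rw [lintegral_lintegral_swap hmeas.aemeasurable]
      _ = (∫⁻ u, k u ^ t * I) * I ^ (t - 1) := by
        congr 2; funext u
        have : Measurable fun x => f (x - u) := hf.comp (measurable_id.sub measurable_const)
        rw [lintegral_const_mul _ this, lintegral_sub_right_eq_self f u]
      _ = (∫⁻ u, k u ^ t) * (I * I ^ (t - 1)) := by
        rw [lintegral_mul_const _ (hk.pow_const t), mul_assoc]
      _ = _ := by
        congr 1
        nth_rw 1 [← ENNReal.rpow_one I]
        rw [← ENNReal.rpow_add_of_nonneg _ _ zero_le_one (by linarith)]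
        congr 1; ring
  calc _ ≤ ((∫⁻ u, k u ^ t) * I ^ t) ^ (1 / t) := by gcongr
    _ = _ := by
      rw [ENNReal.mul_rpow_of_nonneg _ _ hti0, ← ENNReal.rpow_mul, mul_one_div_cancel t0.ne',
        ENNReal.rpow_one]

/-- truncated Newtonian kernel -/
def newt (R : ℝ) (u : EuclideanSpace ℝ (Fin N)) : ℝ≥0∞ :=
  (ball (0 : EuclideanSpace ℝ (Fin N)) R).indicator
    (fun u => ENNReal.ofReal (‖u‖ ^ (2 - (N : ℝ)))) u

lemma newt_measurable (R : ℝ) : Measurable (newt (N := N) R) := by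
  unfold newt
  refine Measurable.indicator ?_ measurableSet_ball
  exact (measurable_norm.pow_const _).ennreal_ofReal

lemma newt_smul {R : ℝ} (hR : 0 < R) (z : EuclideanSpace ℝ (Fin N)) :
    newt R (R • z) = ENNReal.ofReal (R ^ (2 - (N : ℝ))) * newt 1 z := by
  unfold newt
  by_cases h : ‖z‖ < 1
  · rw [indicator_of_mem, indicator_of_mem, ← ENNReal.ofReal_mul (by positivity),
      norm_smul, Real.norm_of_nonneg hR.le, Real.mul_rpow hR.le (norm_nonneg _)]
    · simpa using h
    · simp only [mem_ball_zero_iff, norm_smul, Real.norm_of_nonneg hR.le]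
      nlinarith
  · rw [indicator_of_notMem, indicator_of_notMem, mul_zero]
    · simpa using h
    · simp only [mem_ball_zero_iff, norm_smul, Real.norm_of_nonneg hR.le, not_lt] at h ⊢
      nlinarith

lemma newt_lintegral {R : ℝ} (hR : 0 < R) {t : ℝ} (ht : 1 ≤ t) :
    (∫⁻ u, newt (N := N) R u ^ t) ^ (1 / t) =
      ENNReal.ofReal (R ^ ((N : ℝ) * (1 / t - 1) + 2)) *
        (∫⁻ u, newt (N := N) 1 u ^ t) ^ (1 / t) := by
  have t0 : 0 < t := by linarith
  have h1 := lintegral_scale (N := N) (inv_pos.mpr hR) (g := fun u => newt 1 u ^ t)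
    ((newt_measurable 1).pow_const t)
  have h2 := lintegral_scale (N := N) hR (g := fun u => newt R u ^ t)
    ((newt_measurable R).pow_const t)
  simp only [newt_smul hR, ENNReal.mul_rpow_of_nonneg _ _ t0.le] at h2
  rw [lintegral_const_mul _ ((newt_measurable 1).pow_const t)] at h2
  have h3 : ∫⁻ u, newt (N := N) R u ^ t = ENNReal.ofReal (R ^ N) *
      (ENNReal.ofReal (R ^ (2 - (N : ℝ))) ^ t * ∫⁻ u, newt (N := N) 1 u ^ t) := by
    rw [h2, ← mul_assoc, ← ENNReal.ofReal_mul (by positivity),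
      mul_inv_cancel₀ (by positivity)]
    simp
  rw [h3, ← mul_assoc, ENNReal.mul_rpow_of_nonneg _ _ (by positivity)]
  congr 1
  rw [ENNReal.ofReal_rpow_of_nonneg (by positivity) t0.le,
    ← ENNReal.ofReal_mul (by positivity), ENNReal.ofReal_rpow_of_nonneg (by positivity)
    (by positivity), ← Real.rpow_natCast, ← Real.rpow_mul hR.le, ← Real.rpow_add hR,
    ← Real.rpow_mul hR.le]
  congr 2
  field_simp
  ring

lemma newt_finite (hN : 3 ≤ N) {t : ℝ} (ht1 : 1 ≤ t) (ht2 : t < N / ((N : ℝ) - 2)) :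
    ∫⁻ u, newt (N := N) 1 u ^ t ≠ ∞ := by
  have t0 : 0 < t := by linarith
  have hN' : (3 : ℝ) ≤ N := by exact_mod_cast hN
  have : Nonempty (Fin N) := ⟨⟨0, by omega⟩⟩
  have hi : IntegrableOn (fun x : EuclideanSpace ℝ (Fin N) => ‖x‖ ^ ((2 - (N : ℝ)) * t))
      (ball 0 1) volume := by
    refine (integrableOn_fun_norm_addHaar (f := fun r : ℝ => r ^ ((2 - (N : ℝ)) * t)) volume).2 ?_
    rw [finrank_euclideanSpace, Fintype.card_fin]
    have h0 : IntegrableOn (fun y : ℝ => y ^ ((N : ℝ) - 1 + (2 - N) * t)) (Ioo 0 1) := by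
      rw [intervalIntegral.integrableOn_Ioo_rpow_iff zero_lt_one]
      rw [lt_div_iff₀ (by linarith)] at ht2
      linarith
    refine h0.congr_fun ?_ measurableSet_Ioo
    intro y hy
    simp only [smul_eq_mul]
    rw [Real.rpow_add hy.1, ← Real.rpow_natCast, Nat.cast_sub (by omega)]
    simp
  have hfin := hi.lintegral_lt_top
  refine ne_of_lt (lt_of_le_of_lt (le_of_eq ?_) hfin)
  rw [← lintegral_indicator measurableSet_ball]
  congr 1; funext u
  unfold newt
  by_cases h : u ∈ ball (0 : EuclideanSpace ℝ (Fin N)) 1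
  · rw [indicator_of_mem h, indicator_of_mem h, ENNReal.ofReal_rpow_of_nonneg (by positivity) t0.le,
      ← Real.rpow_mul (norm_nonneg _)]
  · rw [indicator_of_notMem h, indicator_of_notMem h, ENNReal.zero_rpow_of_pos t0]

/-- indicator of the ball of radius `s` -/
def bind1 (s : ℝ) (u : EuclideanSpace ℝ (Fin N)) : ℝ≥0∞ :=
  (ball (0 : EuclideanSpace ℝ (Fin N)) s).indicator (fun _ => 1) u

lemma bind1_measurable (s : ℝ) : Measurable (bind1 (N := N) s) :=
  measurable_const.indicator measurableSet_ball

lemma bind1_measurable2 :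
    Measurable (fun p : ℝ × EuclideanSpace ℝ (Fin N) => bind1 p.1 p.2) := by
  have : (fun p : ℝ × EuclideanSpace ℝ (Fin N) => bind1 p.1 p.2) =
      {p : ℝ × EuclideanSpace ℝ (Fin N) | ‖p.2‖ < p.1}.indicator (fun _ => 1) := by
    funext p; simp [bind1, indicator]
  rw [this]
  exact measurable_const.indicator (measurableSet_lt (by fun_prop) (by fun_prop))

lemma bind1_measurable3 (u : EuclideanSpace ℝ (Fin N)) :
    Measurable (fun s : ℝ => bind1 s u) := by
  have : (fun s : ℝ => bind1 s u) = (Ioi ‖u‖).indicator (fun _ => 1) := by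
    funext p; simp [bind1, indicator]
  rw [this]
  exact measurable_const.indicator measurableSet_Ioi

lemma kernel_le (hN : 3 ≤ N) (R : ℝ) (u : EuclideanSpace ℝ (Fin N)) (hu : u ≠ 0) :
    ∫⁻ s in Ioc 0 R, ENNReal.ofReal s * ENNReal.ofReal (s ^ N)⁻¹ *
      bind1 s u ≤ newt R u := by
  have hN' : (3 : ℝ) ≤ N := by exact_mod_cast hN
  have hu' : 0 < ‖u‖ := norm_pos_iff.mpr hu
  by_cases h : ‖u‖ < R
  · rw [newt, indicator_of_mem (by simpa using h)]
    calc _ ≤ ∫⁻ s in Ioi ‖u‖, ENNReal.ofReal (s ^ (1 - (N : ℝ))) := by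
          rw [← lintegral_indicator measurableSet_Ioc, ← lintegral_indicator measurableSet_Ioi]
          refine lintegral_mono fun s => ?_
          by_cases hs : s ∈ Ioc 0 R
          · rw [indicator_of_mem hs]
            by_cases hus : ‖u‖ < s
            · rw [indicator_of_mem (show s ∈ Ioi ‖u‖ from hus),
                bind1, indicator_of_mem (show u ∈ ball 0 s by simpa using hus),
                ← ENNReal.ofReal_mul hs.1.le, Real.rpow_sub hs.1, Real.rpow_one, Real.rpow_natCast]
              simp [div_eq_mul_inv]
            · rw [bind1, indicator_of_notMem (show u ∉ ball 0 s by simpa using hus)]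
              simp
          · rw [indicator_of_notMem hs]; exact zero_le
      _ = ENNReal.ofReal (∫ s in Ioi ‖u‖, s ^ (1 - (N : ℝ))) := by
          rw [ofReal_integral_eq_lintegral_ofReal
            (integrableOn_Ioi_rpow_of_lt (by linarith) hu')]
          filter_upwards [ae_restrict_mem measurableSet_Ioi] with s hs
          have : 0 < s := hu'.trans hs
          simp only [Pi.zero_apply]
          positivity
      _ ≤ _ := by
          apply ENNReal.ofReal_le_ofReal
          rw [integral_Ioi_rpow_of_lt (by linarith) hu']
          have e : 1 - (N : ℝ) + 1 = 2 - N := by ring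
          rw [e, neg_div, ← div_neg]
          refine div_le_self (by positivity) (by linarith)
  · refine le_of_eq_of_le ?_ zero_le
    rw [setLIntegral_congr_fun (g := fun _ => 0) measurableSet_Ioc]
    · simp
    · intro s hs
      have : u ∉ ball (0 : EuclideanSpace ℝ (Fin N)) s := by
        simp only [mem_ball_zero_iff, not_lt] at h ⊢
        exact hs.2.trans h
      simp [bind1, this]

lemma second_le (hN : 3 ≤ N) {R : ℝ} (hR : 0 < R) {g : EuclideanSpace ℝ (Fin N) → ℝ}
    (hg : Continuous g) {x : EuclideanSpace ℝ (Fin N)} (hx : ‖x‖ < R) :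
    ‖∫ s in (0 : ℝ)..R, s * ∫ z, kpsi z * g (x - s • z)‖ₑ ≤
      ∫⁻ u, newt R u * (ball (0 : EuclideanSpace ℝ (Fin N)) (2 * R)).indicator
        (fun y => ‖g y‖ₑ) (x - u) := by
  have hgm : Measurable g := hg.measurable
  have : Nonempty (Fin N) := ⟨⟨0, by omega⟩⟩
  have hF : Measurable fun u => ‖g (x - u)‖ₑ :=
    (hgm.comp (measurable_const.sub measurable_id)).enorm
  have hm1 : Measurable fun s : ℝ => ENNReal.ofReal s * ENNReal.ofReal (s ^ N)⁻¹ := by fun_prop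
  rw [intervalIntegral.integral_of_le hR.le]
  calc _ ≤ ∫⁻ s in Ioc 0 R, ‖s * ∫ z, kpsi z * g (x - s • z)‖ₑ := enorm_integral_le_lintegral_enorm _
    _ ≤ ∫⁻ s in Ioc 0 R, ENNReal.ofReal s * ENNReal.ofReal (s ^ N)⁻¹ *
        ∫⁻ u, bind1 s u * ‖g (x - u)‖ₑ := by
      refine setLIntegral_mono' measurableSet_Ioc fun s hs => ?_
      rw [enorm_mul, Real.enorm_of_nonneg hs.1.le, mul_assoc]
      gcongr
      rw [← lintegral_scale hs.1]
      · refine (enorm_integral_le_lintegral_enorm _).trans (lintegral_mono fun z => ?_)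
        rw [enorm_mul]
        by_cases hz : ‖z‖ < 1
        · rw [bind1, indicator_of_mem]
          · gcongr
            rw [Real.enorm_of_nonneg (kpsi_nonneg z)]
            simpa using kpsi_le z
          · simp only [mem_ball_zero_iff, norm_smul, Real.norm_of_nonneg hs.1.le]
            nlinarith [hs.1]
        · rw [kpsi_zero (not_lt.mp hz)]; simp
      · exact (bind1_measurable s).mul hF
    _ = ∫⁻ s in Ioc 0 R, ∫⁻ u, ENNReal.ofReal s * ENNReal.ofReal (s ^ N)⁻¹ *
         bind1 s u * ‖g (x - u)‖ₑ := by
      congr 1; funext s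
      have hmm : Measurable fun u : EuclideanSpace ℝ (Fin N) => bind1 s u * ‖g (x - u)‖ₑ :=
        (bind1_measurable s).mul hF
      rw [← lintegral_const_mul _ hmm]
      simp only [mul_assoc]
    _ = ∫⁻ u, ∫⁻ s in Ioc 0 R, ENNReal.ofReal s * ENNReal.ofReal (s ^ N)⁻¹ *
         bind1 s u * ‖g (x - u)‖ₑ := by
      rw [lintegral_lintegral_swap]
      have h1 : Measurable fun p : ℝ × EuclideanSpace ℝ (Fin N) =>
          ENNReal.ofReal p.1 * ENNReal.ofReal (p.1 ^ N)⁻¹ := hm1.comp measurable_fst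
      have h2 : Measurable fun p : ℝ × EuclideanSpace ℝ (Fin N) => ‖g (x - p.2)‖ₑ :=
        hF.comp measurable_snd
      exact ((h1.mul bind1_measurable2).mul h2).aemeasurable
    _ = ∫⁻ u, (∫⁻ s in Ioc 0 R, ENNReal.ofReal s * ENNReal.ofReal (s ^ N)⁻¹ *
         bind1 s u) * ‖g (x - u)‖ₑ := by
      congr 1; funext u
      exact lintegral_mul_const (μ := volume.restrict (Ioc 0 R)) ‖g (x - u)‖ₑ
        (hm1.mul (bind1_measurable3 u))
    _ ≤ ∫⁻ u, newt R u * ‖g (x - u)‖ₑ := by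
      refine lintegral_mono_ae ?_
      have h0 : ∀ᵐ u : EuclideanSpace ℝ (Fin N), u ≠ 0 := by
        simp [ae_iff]
      filter_upwards [h0] with u hu
      gcongr
      exact kernel_le hN R u hu
    _ = _ := by
      congr 1; funext u
      by_cases hu : ‖u‖ < R
      · rw [indicator_of_mem]
        rw [mem_ball_zero_iff]
        linarith [norm_sub_le x u]
      · rw [newt, indicator_of_notMem (by simpa using hu)]; simp

lemma first_le {R : ℝ} (hR : 0 < R) {g : EuclideanSpace ℝ (Fin N) → ℝ}
    (hg : Continuous g) {x : EuclideanSpace ℝ (Fin N)} (hx : ‖x‖ < R) :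
    ‖∫ z, kphi z * g (x - R • z)‖ₑ ≤
      4 * ENNReal.ofReal (R ^ N)⁻¹ * ∫⁻ y in ball (0 : EuclideanSpace ℝ (Fin N)) (2 * R), ‖g y‖ₑ := by
  have hgm : Measurable g := hg.measurable
  have hG : Measurable ((ball (0 : EuclideanSpace ℝ (Fin N)) (2 * R)).indicator
        (fun y => ‖g y‖ₑ)) := hgm.enorm.indicator measurableSet_ball
  have hG2 : Measurable fun u => (ball (0 : EuclideanSpace ℝ (Fin N)) (2 * R)).indicator
        (fun y => ‖g y‖ₑ) (x - u) := hG.comp (measurable_const.sub measurable_id)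
  rw [← lintegral_indicator measurableSet_ball, mul_assoc,
    ← lintegral_sub_left_eq_self _ x, ← lintegral_scale hR hG2, ← lintegral_const_mul]
  · refine (enorm_integral_le_lintegral_enorm _).trans (lintegral_mono fun z => ?_)
    rw [enorm_mul]
    by_cases hz : ‖z‖ < 1
    · rw [indicator_of_mem]
      · gcongr
        rw [Real.enorm_of_nonneg (kphi_nonneg z)]
        have := ENNReal.ofReal_le_ofReal (kphi_le z)
        simpa using this
      · rw [mem_ball_zero_iff]
        have := norm_sub_le x (R • z)
        rw [norm_smul, Real.norm_of_nonneg hR.le] at this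
        nlinarith
    · rw [kphi_zero (not_lt.mp hz)]; simp
  · exact hG2.comp (measurable_const_smul R)

end estimates
section final
open scoped ENNReal
variable {N : ℕ}

lemma cutoff_exists {R : ℝ} (hR : 0 < R) {w : EuclideanSpace ℝ (Fin N) → ℝ}
    {U : Set (EuclideanSpace ℝ (Fin N))} (hU : IsOpen U)
    (hb : closedBall (0 : EuclideanSpace ℝ (Fin N)) (2 * R) ⊆ U) (hw : ContDiffOn ℝ 2 w U) :
    ∃ v : EuclideanSpace ℝ (Fin N) → ℝ, ContDiff ℝ 2 v ∧ HasCompactSupport v ∧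
      ∀ x ∈ ball (0 : EuclideanSpace ℝ (Fin N)) (2 * R), v x = w x := by
  obtain ⟨δ, hδ, hsub⟩ := (isCompact_closedBall (0 : EuclideanSpace ℝ (Fin N))
    (2 * R)).exists_cthickening_subset_open hU hb
  rw [cthickening_closedBall hδ.le (by positivity)] at hsub
  let b : ContDiffBump (0 : EuclideanSpace ℝ (Fin N)) :=
    ⟨2 * R, 2 * R + δ, by positivity, by linarith⟩
  refine ⟨fun x => b x * w x, ?_, b.hasCompactSupport.mul_right, ?_⟩
  · rw [contDiff_iff_contDiffAt]
    intro x
    by_cases hx : x ∈ U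
    · exact b.contDiffAt.mul (hw.contDiffAt (hU.mem_nhds hx))
    · have hx' : x ∉ tsupport b := by
        rw [b.tsupport_eq]
        intro h
        apply hx; apply hsub
        rw [add_comm]; exact h
      have : (fun x => b x * w x) =ᶠ[nhds x] fun _ => 0 := by
        filter_upwards [notMem_tsupport_iff_eventuallyEq.mp hx'] with y hy
        simp [hy]
      exact contDiffAt_const.congr_of_eventuallyEq this
  · intro x hx
    have : b x = 1 := b.one_of_mem_closedBall (ball_subset_closedBall hx)
    simp [this]

lemma lap_congr {R : ℝ} {v w : EuclideanSpace ℝ (Fin N) → ℝ}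
    (h : ∀ x ∈ ball (0 : EuclideanSpace ℝ (Fin N)) R, v x = w x)
    {x : EuclideanSpace ℝ (Fin N)} (hx : x ∈ ball (0 : EuclideanSpace ℝ (Fin N)) R) :
    lap v x = lap w x := by
  have h1 : v =ᶠ[nhds x] w := by
    filter_upwards [isOpen_ball.mem_nhds hx] with y hy using h y hy
  unfold lap
  refine Finset.sum_congr rfl fun i _ => ?_
  have h2 : (fun y => fderiv ℝ v y (EuclideanSpace.single i 1)) =ᶠ[nhds x]
      fun y => fderiv ℝ w y (EuclideanSpace.single i 1) := by
    filter_upwards [h1.fderiv (𝕜 := ℝ)] with y hy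
    rw [hy]
  rw [h2.fderiv_eq]

lemma ennreal_main (hN : 3 ≤ N) {t : ℝ} (ht1 : 1 ≤ t)
    {R : ℝ} (hR : 0 < R) {w : EuclideanSpace ℝ (Fin N) → ℝ} (hw : ContDiff ℝ 2 w)
    (hc : HasCompactSupport w) :
    ENNReal.ofReal (∫ z : EuclideanSpace ℝ (Fin N), kphi z) *
      (∫⁻ x in ball (0 : EuclideanSpace ℝ (Fin N)) R, ‖w x‖ₑ ^ t) ^ (1 / t) ≤
    ENNReal.ofReal (R ^ ((N : ℝ) * (1 / t - 1) + 2)) *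
        (∫⁻ u, newt (N := N) 1 u ^ t) ^ (1 / t) *
        (∫⁻ x in ball (0 : EuclideanSpace ℝ (Fin N)) (2 * R), ‖lap w x‖ₑ) +
    4 * ENNReal.ofReal (R ^ ((N : ℝ) * (1 / t - 1))) *
        volume (ball (0 : EuclideanSpace ℝ (Fin N)) 1) ^ (1 / t) *
        (∫⁻ x in ball (0 : EuclideanSpace ℝ (Fin N)) (2 * R), ‖w x‖ₑ) := by
  have t0 : 0 < t := by linarith
  have hti : 0 ≤ 1 / t := by positivity
  have : Nonempty (Fin N) := ⟨⟨0, by omega⟩⟩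
  have hl := lap_continuous_s17 hw
  set c := ∫ z : EuclideanSpace ℝ (Fin N), kphi z with hcdef
  have hcpos : 0 < c := kphi_integral_pos
  set F : EuclideanSpace ℝ (Fin N) → ℝ≥0∞ :=
    (ball (0 : EuclideanSpace ℝ (Fin N)) (2 * R)).indicator (fun y => ‖lap w y‖ₑ) with hF
  have hFm : Measurable F := hl.measurable.enorm.indicator measurableSet_ball
  set W := ∫⁻ x in ball (0 : EuclideanSpace ℝ (Fin N)) (2 * R), ‖w x‖ₑ with hW
  set a : ℝ≥0∞ := 4 * ENNReal.ofReal (R ^ N)⁻¹ * W with ha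
  set G : EuclideanSpace ℝ (Fin N) → ℝ≥0∞ := fun x => ∫⁻ u, newt R u * F (x - u) with hG
  have hGm : Measurable G := by
    have hmeas : Measurable (Function.uncurry fun (x u : EuclideanSpace ℝ (Fin N)) =>
        newt R u * F (x - u)) :=
      ((newt_measurable R).comp measurable_snd).mul (hFm.comp (measurable_fst.sub measurable_snd))
    exact hmeas.lintegral_prod_right
  have hpt : ∀ x ∈ ball (0 : EuclideanSpace ℝ (Fin N)) R,
      ENNReal.ofReal c * ‖w x‖ₑ ≤ G x + a := by
    intro x hx
    have hx' : ‖x‖ < R := by simpa using hx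
    have h := repr_formula hw hc x R
    rw [← Real.enorm_of_nonneg hcpos.le, ← enorm_mul, h, add_comm]
    exact (enorm_sub_le).trans (add_le_add (first_le hR hw.continuous hx')
      (second_le hN hR hl hx'))
  have hvol : volume (ball (0 : EuclideanSpace ℝ (Fin N)) R) =
      ENNReal.ofReal (R ^ N) * volume (ball (0 : EuclideanSpace ℝ (Fin N)) 1) := by
    rw [Measure.addHaar_ball _ _ hR.le]; simp
  calc _ = (∫⁻ x in ball (0 : EuclideanSpace ℝ (Fin N)) R,
        (ENNReal.ofReal c * ‖w x‖ₑ) ^ t) ^ (1 / t) := by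
        simp only [ENNReal.mul_rpow_of_nonneg _ _ t0.le]
        rw [lintegral_const_mul _ (hw.continuous.measurable.enorm.pow_const t),
          ENNReal.mul_rpow_of_nonneg _ _ hti, ← ENNReal.rpow_mul, mul_one_div_cancel t0.ne',
          ENNReal.rpow_one]
    _ ≤ (∫⁻ x in ball (0 : EuclideanSpace ℝ (Fin N)) R, ((G + (fun _ => a : EuclideanSpace ℝ (Fin N) → ℝ≥0∞)) x) ^ t) ^ (1 / t) := by
        refine ENNReal.rpow_le_rpow (setLIntegral_mono' measurableSet_ball fun x hx => ?_) hti
        exact ENNReal.rpow_le_rpow (hpt x hx) t0.le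
    _ ≤ (∫⁻ x in ball (0 : EuclideanSpace ℝ (Fin N)) R, G x ^ t) ^ (1 / t) +
        (∫⁻ x in ball (0 : EuclideanSpace ℝ (Fin N)) R, a ^ t) ^ (1 / t) :=
        ENNReal.lintegral_Lp_add_le hGm.aemeasurable aemeasurable_const ht1
    _ ≤ _ := by
        refine add_le_add ?_ (le_of_eq ?_)
        · calc _ ≤ (∫⁻ x, G x ^ t) ^ (1 / t) := by
                exact ENNReal.rpow_le_rpow (setLIntegral_le_lintegral _ _) hti
            _ ≤ (∫⁻ u, newt (N := N) R u ^ t) ^ (1 / t) * ∫⁻ y, F y :=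
                conv_bound ht1 (newt_measurable R) hFm
            _ = _ := by
                rw [newt_lintegral hR ht1, hF, lintegral_indicator measurableSet_ball]
        · rw [lintegral_const, Measure.restrict_apply_univ, hvol,
            ENNReal.mul_rpow_of_nonneg _ _ hti, ← ENNReal.rpow_mul, mul_one_div_cancel t0.ne',
            ENNReal.rpow_one, ENNReal.mul_rpow_of_nonneg _ _ hti,
            ENNReal.ofReal_rpow_of_nonneg (by positivity) hti, ha]
          have e : R ^ ((N : ℝ) * (1 / t - 1)) = (R ^ N)⁻¹ * (R ^ N) ^ (1 / t) := by
            rw [← Real.rpow_natCast, ← Real.rpow_neg hR.le, ← Real.rpow_mul hR.le,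
              ← Real.rpow_add hR]
            congr 1; ring
          rw [e, ENNReal.ofReal_mul (by positivity)]
          ring

lemma lint_eq {g : EuclideanSpace ℝ (Fin N) → ℝ} (hg : Continuous g) (r : ℝ) :
    ∫⁻ x in ball (0 : EuclideanSpace ℝ (Fin N)) r, ‖g x‖ₑ =
      ENNReal.ofReal (∫ x in ball (0 : EuclideanSpace ℝ (Fin N)) r, |g x|) := by
  rw [ofReal_integral_eq_lintegral_ofReal]
  · simp only [← Real.enorm_eq_ofReal_abs]
  · exact (hg.abs.continuousOn.integrableOn_compact (isCompact_closedBall 0 r)).mono_set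
      ball_subset_closedBall
  · exact Filter.Eventually.of_forall fun x => abs_nonneg _

end final

/-- elliptic `L^t` estimate on balls. -/
theorem stmt17 {N : ℕ} (hN : 3 ≤ N) (t : ℝ) (ht1 : 1 ≤ t) (ht2 : t < N / ((N : ℝ) - 2)) :
    ∃ C : ℝ, 0 < C ∧ ∀ R : ℝ, 0 < R → ∀ w : EuclideanSpace ℝ (Fin N) → ℝ,
      (∃ U : Set (EuclideanSpace ℝ (Fin N)), IsOpen U ∧
        closedBall (0 : EuclideanSpace ℝ (Fin N)) (2 * R) ⊆ U ∧ ContDiffOn ℝ 2 w U) →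
      (∫ x in ball (0 : EuclideanSpace ℝ (Fin N)) R, |w x| ^ t) ^ (1 / t)
        ≤ C * R ^ ((N : ℝ) * (1 / t - 1) + 2) *
            (∫ x in ball (0 : EuclideanSpace ℝ (Fin N)) (2 * R), |lap w x|)
          + C * R ^ ((N : ℝ) * (1 / t - 1)) *
            ∫ x in ball (0 : EuclideanSpace ℝ (Fin N)) (2 * R), |w x| := by
  have t0 : 0 < t := by linarith
  set c := ∫ z : EuclideanSpace ℝ (Fin N), kphi z with hcdef
  have hcpos : 0 < c := kphi_integral_pos
  set L := ((∫⁻ u, newt (N := N) 1 u ^ t) ^ (1 / t)) with hL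
  set V := (volume (ball (0 : EuclideanSpace ℝ (Fin N)) 1) ^ (1 / t)) with hV
  have hLfin : L ≠ ⊤ := ENNReal.rpow_ne_top_of_nonneg (by positivity) (newt_finite hN ht1 ht2)
  have hVfin : V ≠ ⊤ := ENNReal.rpow_ne_top_of_nonneg (by positivity) measure_ball_lt_top.ne
  have hL0 : 0 ≤ L.toReal := ENNReal.toReal_nonneg
  have hV0 : 0 ≤ V.toReal := ENNReal.toReal_nonneg
  refine ⟨(L.toReal + 4 * V.toReal + 1) / c, by positivity, ?_⟩
  rintro R hR w ⟨U, hU, hb, hw⟩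
  obtain ⟨v, hv, hvc, hvw⟩ := cutoff_exists hR hU hb hw
  have hl := lap_continuous_s17 hv
  have e1 : ∫ x in ball (0 : EuclideanSpace ℝ (Fin N)) R, |w x| ^ t =
      ∫ x in ball (0 : EuclideanSpace ℝ (Fin N)) R, |v x| ^ t :=
    setIntegral_congr_fun measurableSet_ball fun x hx => by
      simp only [hvw x (ball_subset_ball (by linarith) hx)]
  have e2 : ∫ x in ball (0 : EuclideanSpace ℝ (Fin N)) (2 * R), |lap w x| =
      ∫ x in ball (0 : EuclideanSpace ℝ (Fin N)) (2 * R), |lap v x| :=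
    setIntegral_congr_fun measurableSet_ball fun x hx => by
      simp only [lap_congr hvw hx]
  have e3 : ∫ x in ball (0 : EuclideanSpace ℝ (Fin N)) (2 * R), |w x| =
      ∫ x in ball (0 : EuclideanSpace ℝ (Fin N)) (2 * R), |v x| :=
    setIntegral_congr_fun measurableSet_ball fun x hx => by
      simp only [hvw x hx]
  rw [e1, e2, e3]
  have main := ennreal_main hN ht1 hR hv hvc
  have hvt : Continuous fun x => |v x| ^ t :=
    hv.continuous.abs.rpow_const fun x => Or.inr t0.le
  have e4 : ∫⁻ x in ball (0 : EuclideanSpace ℝ (Fin N)) R, ‖v x‖ₑ ^ t =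
      ENNReal.ofReal (∫ x in ball (0 : EuclideanSpace ℝ (Fin N)) R, |v x| ^ t) := by
    have := lint_eq hvt R
    have h5 : ∀ x, |(|v x| ^ t)| = |v x| ^ t := fun x => abs_of_nonneg (by positivity)
    simp only [h5] at this
    rw [← this]
    congr 1; funext x
    rw [Real.enorm_eq_ofReal_abs, Real.enorm_eq_ofReal_abs, h5,
      ENNReal.ofReal_rpow_of_nonneg (abs_nonneg _) t0.le]
  rw [e4, lint_eq hl, lint_eq hv.continuous, ← hL, ← hV, ← hcdef] at main
  set I1 := ∫ x in ball (0 : EuclideanSpace ℝ (Fin N)) R, |v x| ^ t with hI1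
  set I2 := ∫ x in ball (0 : EuclideanSpace ℝ (Fin N)) (2 * R), |lap v x| with hI2
  set I3 := ∫ x in ball (0 : EuclideanSpace ℝ (Fin N)) (2 * R), |v x| with hI3
  have p1 : 0 ≤ I1 := integral_nonneg fun x => by positivity
  have p2 : 0 ≤ I2 := integral_nonneg fun x => abs_nonneg _
  have p3 : 0 ≤ I3 := integral_nonneg fun x => abs_nonneg _
  have q1 : 0 < R ^ ((N : ℝ) * (1 / t - 1) + 2) := by positivity
  have q2 : 0 < R ^ ((N : ℝ) * (1 / t - 1)) := by positivity
  set A := R ^ ((N : ℝ) * (1 / t - 1) + 2)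
  set B := R ^ ((N : ℝ) * (1 / t - 1))
  have four : (4 : ENNReal) = ENNReal.ofReal 4 := by simp
  rw [← ENNReal.ofReal_toReal hLfin, ← ENNReal.ofReal_toReal hVfin, four,
    ENNReal.ofReal_rpow_of_nonneg p1 (by positivity), ← ENNReal.ofReal_mul hcpos.le,
    ← ENNReal.ofReal_mul q1.le, ← ENNReal.ofReal_mul (by positivity),
    ← ENNReal.ofReal_mul (by positivity), ← ENNReal.ofReal_mul (by positivity),
    ← ENNReal.ofReal_mul (by positivity), ← ENNReal.ofReal_add (by positivity) (by positivity),
    ENNReal.ofReal_le_ofReal_iff (by positivity)] at main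
  have goal' : (L.toReal + 4 * V.toReal + 1) / c * A * I2 + (L.toReal + 4 * V.toReal + 1) / c * B * I3
      = ((L.toReal + 4 * V.toReal + 1) * (A * I2) + (L.toReal + 4 * V.toReal + 1) * (B * I3)) / c := by
    ring
  rw [goal', le_div_iff₀ hcpos]
  have r1 : 0 ≤ A * I2 := by positivity
  have r2 : 0 ≤ B * I3 := by positivity
  have r3 : 0 ≤ L.toReal * (B * I3) := by positivity
  have r4 : 0 ≤ V.toReal * (A * I2) := by positivity
  nlinarith
end
end
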